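/- arXiv:2006.07850 — 4 statements merged into one kernel-verified Lean document; each statement's English description precedes it below -/
import Mathlib

section
/- Let T be a power-bounded operator on a reflexive complex Banach space X. If σ(T) ∩ 𝕋 is countable, where 𝕋 = {λ ∈ ℂ : |λ| = 1}, then T is almost periodic: for every x ∈ X the orbit {Tⁿ x : n ≥ 0} is relatively compact in the norm topology. -/
/-!
Let `ρ x` be the class of the orbit of `x` in `ℓ^∞(X)` modulo sequences with relatively compact
range; the orbit of `x` is relatively compact exactly when `ρ x = 0`. Dropping or prepending a term
does not change the seminorm of a class, so `T` induces an isometry `V` on the closure `W` of the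
range of `ρ`. Operators commuting with `T` also descend to `W`, hence `σ(V) ⊆ σ(T)`.

Suppose `W ≠ 0`. The boundary of `σ(V)` lies on the unit circle, and countability of
`σ(V) ∩ 𝕋` leaves a point of `𝕋` in the resolvent set, so `σ(V)` is a nonempty countable closed
subset of `𝕋` and has an isolated point `c`. The estimate `||z| - 1| ‖R(z)‖ ≤ 1`, combined with the
maximum principle on small discs, shows that `(z - c) R(z)` stays bounded near `c`: the pole is
simple, and its nonzero residue `P` satisfies `P V = c P`. Thus `V` has an eigenfunctional for `c`,
which pulls back along `ρ` to a nonzero eigenfunctional of `T`. It vanishes on the eigenvectors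
`T y = c y`, because these have relatively compact orbits. In a reflexive space the mean ergodic
theorem for `c⁻¹ T` rules this out.
-/

open Set Filter Topology Metric
open scoped BoundedContinuousFunction Cardinal ComplexConjugate

theorem exists_mem_not_accPt_of_isClosed_of_countable {α : Type*} [MetricSpace α]
    [CompleteSpace α] {S : Set α} (hS : IsClosed S) (hc : S.Countable) (hne : S.Nonempty) :
    ∃ x ∈ S, ¬ AccPt x (𝓟 S) := by
  by_contra! hacc
  obtain ⟨f, hfS, -, hf⟩ := Perfect.exists_nat_bool_injection ⟨hS, hacc⟩ hne
  have hcard : #(ℕ → Bool) = 𝔠 := by simp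
  have : Countable S := hc.to_subtype
  have hfS' : ∀ t, f t ∈ S := fun t => hfS (mem_range_self t)
  have : Countable (ℕ → Bool) := (hf.codRestrict hfS').countable
  exact (hcard ▸ Cardinal.mk_le_aleph0).not_gt Cardinal.aleph0_lt_continuum

theorem not_countable_sphere {E : Type*} [NormedAddCommGroup E] [NormedSpace ℝ E]
    (h : 1 < Module.rank ℝ E) (x : E) {r : ℝ} (hr : 0 < r) : ¬ (sphere x r).Countable := by
  intro hc
  have : Nontrivial E := (rank_pos_iff_nontrivial (R := ℝ)).1 (zero_lt_one.trans h)
  obtain ⟨v, hv⟩ := NormedSpace.sphere_nonempty (x := (0 : E)) |>.2 hr.le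
  have hsub := hc.isTotallyDisconnected _ subset_rfl (isPreconnected_sphere h x r)
  have hv0 : x + v = x - v := hsub (by simpa using hv) (by simpa using hv)
  have : IsAddTorsionFree E := .of_isTorsionFree ℝ E
  refine ne_of_mem_sphere hv hr.ne' ?_
  rwa [sub_eq_add_neg, add_right_inj, self_eq_neg] at hv0

section Resolvent

variable {𝕜 A : Type*} [NontriviallyNormedField 𝕜] [NormedRing A] [NormedAlgebra 𝕜 A]
  [CompleteSpace A] {a : A} {z w : 𝕜}

theorem one_le_norm_sub_mul_norm_resolvent (hz : z ∈ spectrum 𝕜 a) (hw : w ∈ resolventSet 𝕜 a) :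
    1 ≤ ‖z - w‖ * ‖resolvent a w‖ := by
  by_contra! hlt
  refine hz ?_
  have hfactor : algebraMap 𝕜 A z - a =
      (algebraMap 𝕜 A w - a) * (1 - (w - z) • resolvent a w) := by
    have h : (algebraMap 𝕜 A w - a) * resolvent a w = 1 := Ring.mul_inverse_cancel _ hw
    rw [mul_sub, mul_one, mul_smul_comm, h, ← Algebra.algebraMap_eq_smul_one, map_sub]
    abel
  rw [spectrum.mem_resolventSet_iff, hfactor]
  refine IsUnit.mul hw (isUnit_one_sub_of_norm_lt_one ?_)
  rwa [norm_smul, norm_sub_rev]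

theorem frontier_spectrum_subset_of_norm_resolvent_le {δ : 𝕜 → ℝ} (hδ : Continuous δ)
    (hδ0 : ∀ z, 0 ≤ δ z) {M : ℝ}
    (hM : ∀ z ∈ resolventSet 𝕜 a, δ z * ‖resolvent a z‖ ≤ M) :
    frontier (spectrum 𝕜 a) ⊆ {z | δ z = 0} := by
  intro z hz
  have hzσ : z ∈ spectrum 𝕜 a := (spectrum.isClosed a).frontier_subset hz
  have hzρ : z ∈ closure (resolventSet 𝕜 a) := by
    rw [← compl_compl (resolventSet 𝕜 a), closure_compl]
    exact hz.2
  have hle : δ z ≤ M * ‖z - z‖ := by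
    refine closure_minimal (t := {w | δ w ≤ M * ‖z - w‖}) (fun w hw => ?_)
      (isClosed_le hδ (by fun_prop)) hzρ
    calc δ w ≤ δ w * (‖z - w‖ * ‖resolvent a w‖) :=
          le_mul_of_one_le_right (hδ0 w) (one_le_norm_sub_mul_norm_resolvent hzσ hw)
      _ = δ w * ‖resolvent a w‖ * ‖z - w‖ := by ring
      _ ≤ M * ‖z - w‖ := by gcongr; exact hM w hw
  exact le_antisymm (by simpa using hle) (hδ0 z)

end Resolvent

theorem spectrum_subset_sphere_of_countable {A : Type*} [NormedRing A] [NormOneClass A]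
    [NormedAlgebra ℂ A] [CompleteSpace A] {a : A} (ha : ‖a‖ ≤ 1) {M : ℝ}
    (hM : ∀ z ∈ resolventSet ℂ a, |‖z‖ - 1| * ‖resolvent a z‖ ≤ M)
    (hc : (spectrum ℂ a ∩ sphere 0 1).Countable) : spectrum ℂ a ⊆ sphere 0 1 := by
  have hfrontier : ∀ z ∈ frontier (spectrum ℂ a), ‖z‖ = 1 := fun z hz =>
    sub_eq_zero.1 (abs_eq_zero.1 (frontier_spectrum_subset_of_norm_resolvent_le
      (by fun_prop) (fun _ => abs_nonneg _) hM hz))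
  obtain ⟨u, hu, huρ⟩ : (sphere (0 : ℂ) 1 ∩ resolventSet ℂ a).Nonempty := by
    by_contra hempty
    refine not_countable_sphere (by simp) (0 : ℂ) one_pos
      (hc.mono fun u hu => mem_inter (fun huρ => ?_) hu)
    exact hempty ⟨u, hu, huρ⟩
  have hopen : IsOpen (resolventSet ℂ a) := spectrum.isOpen_resolventSet a
  have hball : ball 0 1 ⊆ resolventSet ℂ a := by
    refine (convex_ball (0 : ℂ) 1).isPreconnected.subset_of_closure_inter_subset hopen ?_ ?_
    · have hu' : u ∈ closure (ball (0 : ℂ) 1) := by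
        rw [closure_ball _ one_ne_zero]
        exact sphere_subset_closedBall hu
      rw [inter_comm]
      exact mem_closure_iff.1 hu' _ hopen huρ
    · rintro y ⟨hyρ, hy⟩
      by_contra hyσ
      refine (mem_ball_zero_iff.1 hy).ne (hfrontier y ⟨subset_closure hyσ, ?_⟩)
      rwa [← mem_compl_iff, ← closure_compl, spectrum, compl_compl]
  intro z hz
  have hle : ‖z‖ ≤ 1 := (spectrum.norm_le_norm_of_mem hz).trans ha
  refine mem_sphere_zero_iff_norm.2 (hle.antisymm (not_lt.1 fun hlt => hz (hball ?_)))
  exact mem_ball_zero_iff.2 hlt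

theorem norm_conj_mul_sq_add_eq_of_mem_sphere {w z : ℂ} {r : ℝ} (hz : z ∈ sphere w r) :
    ‖conj w * (z - w) ^ 2 + (‖w‖ ^ 2 + r ^ 2 - 1) * (z - w) + r ^ 2 * w‖ =
      r * |‖z‖ ^ 2 - 1| := by
  have hr : ‖z - w‖ = r := mem_sphere_iff_norm.1 hz
  -- On the circle `conj (z - w) = r ^ 2 / (z - w)`, so `(z - w) * (|z| ^ 2 - 1)` agrees there with
  -- a polynomial in `z`, to which the maximum principle applies.
  have hpoly : conj w * (z - w) ^ 2 + (‖w‖ ^ 2 + r ^ 2 - 1) * (z - w) + r ^ 2 * w =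
      (z - w) * ((‖z‖ ^ 2 - 1 : ℝ) : ℂ) := by
    push_cast
    rw [← hr, ← Complex.mul_conj' z, ← Complex.mul_conj' w, ← Complex.mul_conj' (z - w), map_sub]
    ring
  rw [hpoly, norm_mul, hr, Complex.norm_real, Real.norm_eq_abs]

section UnitCircle

variable {A : Type*} [NormedRing A] [NormedAlgebra ℂ A] [CompleteSpace A] {a : A} {M : ℝ}

theorem norm_mul_norm_resolvent_le_of_closedBall_subset
    (hM : ∀ z ∈ resolventSet ℂ a, |‖z‖ - 1| * ‖resolvent a z‖ ≤ M)
    {w : ℂ} {r : ℝ} (hr : 0 < r) (hw : closedBall w r ⊆ resolventSet ℂ a) :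
    ‖w‖ * (r * ‖resolvent a w‖) ≤ (‖w‖ + r + 1) * M := by
  let q : ℂ → ℂ := fun z =>
    conj w * (z - w) ^ 2 + (‖w‖ ^ 2 + r ^ 2 - 1) * (z - w) + r ^ 2 * w
  have hq : Differentiable ℂ q := by fun_prop
  have hd : DifferentiableOn ℂ (fun z => q z • resolvent a z) (closedBall w r) := fun z hz =>
    ((hq z).smul (spectrum.hasDerivAt_resolvent_const_left
      (hw hz)).differentiableAt).differentiableWithinAt
  have hsphere : ∀ z ∈ sphere w r, ‖q z • resolvent a z‖ ≤ r * ((‖w‖ + r + 1) * M) := by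
    intro z hz
    have hzw : ‖z‖ ≤ ‖w‖ + r := by
      simpa [mem_sphere_iff_norm.1 hz] using norm_le_norm_add_norm_sub' z w
    have hMz := hM z (hw (sphere_subset_closedBall hz))
    calc ‖q z • resolvent a z‖ = r * |‖z‖ ^ 2 - 1| * ‖resolvent a z‖ := by
          rw [norm_smul, norm_conj_mul_sq_add_eq_of_mem_sphere hz]
      _ = r * ((‖z‖ + 1) * (|‖z‖ - 1| * ‖resolvent a z‖)) := by
          have hfactor : ‖z‖ ^ 2 - 1 = (‖z‖ + 1) * (‖z‖ - 1) := by ring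
          rw [hfactor, abs_mul, abs_of_nonneg (by positivity : 0 ≤ ‖z‖ + 1)]
          ring
      _ ≤ r * ((‖w‖ + r + 1) * M) := by gcongr
  have hcenter : ‖q w • resolvent a w‖ ≤ r * ((‖w‖ + r + 1) * M) := by
    refine Complex.norm_le_of_forall_mem_frontier_norm_le isBounded_ball
      (hd.diffContOnCl_ball subset_rfl) ?_ (subset_closure (mem_ball_self hr))
    rwa [frontier_ball w hr.ne']
  have hqw : ‖q w • resolvent a w‖ = r * (‖w‖ * (r * ‖resolvent a w‖)) := by
    simp only [q, sub_self, zero_pow two_ne_zero, mul_zero, zero_add, norm_smul, norm_mul, norm_pow,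
      Complex.norm_real, Real.norm_eq_abs, abs_of_pos hr]
    ring
  rw [hqw] at hcenter
  exact le_of_mul_le_mul_left hcenter hr

theorem isBoundedUnder_norm_sub_smul_resolvent
    (hM : ∀ z ∈ resolventSet ℂ a, |‖z‖ - 1| * ‖resolvent a z‖ ≤ M) {c : ℂ} (hc0 : c ≠ 0)
    (hc : ∀ᶠ z in 𝓝[≠] c, z ∈ resolventSet ℂ a) :
    IsBoundedUnder (· ≤ ·) (𝓝[≠] c) fun z => ‖(z - c) • resolvent a z‖ := by
  have hlim : Tendsto (fun z : ℂ => 2 * ((‖z‖ + ‖z - c‖ / 2 + 1) * M) / ‖z‖) (𝓝[≠] c)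
      (𝓝 (2 * ((‖c‖ + ‖c - c‖ / 2 + 1) * M) / ‖c‖)) :=
    tendsto_nhdsWithin_of_tendsto_nhds <| ContinuousAt.tendsto <|
      ContinuousAt.div (by fun_prop) (by fun_prop) (norm_ne_zero_iff.2 hc0)
  refine hlim.isBoundedUnder_le.mono_le ?_
  obtain ⟨ε, hε, hball⟩ := Metric.mem_nhdsWithin_iff.1 hc
  have hz0 : ∀ᶠ z in 𝓝[≠] c, z ≠ 0 :=
    eventually_nhdsWithin_of_eventually_nhds (eventually_ne_nhds hc0)
  have hnear : ∀ᶠ z in 𝓝[≠] c, z ∈ ball c (ε / 2) :=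
    mem_nhdsWithin_of_mem_nhds (ball_mem_nhds c (half_pos hε))
  filter_upwards [hz0, self_mem_nhdsWithin, hnear] with z hz0 hzc hz
  have hpos : 0 < ‖z - c‖ := norm_pos_iff.2 (sub_ne_zero.2 hzc)
  have hsub : closedBall z (‖z - c‖ / 2) ⊆ resolventSet ℂ a := by
    refine fun w hw => hball ⟨?_, ?_⟩
    · rw [mem_ball] at hz ⊢
      rw [mem_closedBall, ← dist_eq_norm] at hw
      linarith [dist_triangle w z c]
    · rintro rfl
      rw [mem_closedBall, dist_comm, dist_eq_norm] at hw
      linarith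
  have hle := norm_mul_norm_resolvent_le_of_closedBall_subset hM (half_pos hpos) hsub
  rw [le_div_iff₀ (norm_pos_iff.2 hz0), norm_smul]
  linarith

theorem exists_ne_zero_mul_eq_smul_of_not_accPt
    (hM : ∀ z ∈ resolventSet ℂ a, |‖z‖ - 1| * ‖resolvent a z‖ ≤ M) {c : ℂ} (hc0 : c ≠ 0)
    (hcσ : c ∈ spectrum ℂ a) (hc : ¬ AccPt c (𝓟 (spectrum ℂ a))) :
    ∃ p : A, p ≠ 0 ∧ p * a = c • p := by
  have hρ : ∀ᶠ z in 𝓝[≠] c, z ∈ resolventSet ℂ a := by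
    simpa [accPt_iff_frequently_nhdsNE, spectrum] using hc
  let f : ℂ → A := fun z => (z - c) • resolvent a z
  obtain ⟨p, hp⟩ : ∃ p, Tendsto f (𝓝[≠] c) (𝓝 p) :=
    ⟨_, Complex.tendsto_limUnder_of_differentiable_on_punctured_nhds_of_bounded_under
      (hρ.mono fun z hz => (differentiableAt_id.sub_const c).smul
        (spectrum.hasDerivAt_resolvent_const_left hz).differentiableAt)
      (by simpa [f] using isBoundedUnder_norm_sub_smul_resolvent hM hc0 hρ)⟩
  refine ⟨p, ?_, ?_⟩
  · have hp1 : 1 ≤ ‖p‖ := ge_of_tendsto hp.norm <| hρ.mono fun z hz => by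
      rw [norm_smul, norm_sub_rev]
      exact one_le_norm_sub_mul_norm_resolvent hcσ hz
    exact norm_pos_iff.1 (one_pos.trans_le hp1)
  · have hid : Tendsto id (𝓝[≠] c) (𝓝 c) := tendsto_id.mono_left nhdsWithin_le_nhds
    have hlim : Tendsto (fun z => f z * (algebraMap ℂ A z - a)) (𝓝[≠] c)
        (𝓝 (p * (algebraMap ℂ A c - a))) :=
      hp.mul (((continuous_algebraMap ℂ A).tendsto c |>.comp hid).sub_const a)
    have hlim0 : Tendsto (fun z => f z * (algebraMap ℂ A z - a)) (𝓝[≠] c) (𝓝 0) := by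
      have h0 : Tendsto (fun z => (z - c) • (1 : A)) (𝓝[≠] c) (𝓝 0) := by
        simpa using (hid.sub_const c).smul_const (1 : A)
      refine h0.congr' (hρ.mono fun z hz => ?_)
      simp only [f, smul_mul_assoc, resolvent, Ring.inverse_mul_cancel _ hz]
    have hzero := tendsto_nhds_unique hlim hlim0
    rwa [mul_sub, ← Algebra.commutes, ← Algebra.smul_def, sub_eq_zero, eq_comm] at hzero

end UnitCircle

theorem abs_norm_sub_one_mul_norm_resolvent_le_one {𝕜 Z : Type*} [NontriviallyNormedField 𝕜]
    [NormedAddCommGroup Z] [NormedSpace 𝕜 Z] {V : Z →L[𝕜] Z} (hV : ∀ x, ‖V x‖ = ‖x‖)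
    {z : 𝕜} (hz : z ∈ resolventSet 𝕜 V) : |‖z‖ - 1| * ‖resolvent V z‖ ≤ 1 := by
  rcases (abs_nonneg (‖z‖ - 1)).eq_or_lt' with h0 | hpos
  · simp [h0]
  rw [← le_div_iff₀' hpos]
  refine ContinuousLinearMap.opNorm_le_bound _ (by positivity) fun x => ?_
  have hinv : z • resolvent V z x - V (resolvent V z x) = x := by
    have hone : (algebraMap 𝕜 (Z →L[𝕜] Z) z - V) * resolvent V z = 1 :=
      Ring.mul_inverse_cancel _ hz
    simpa [Algebra.algebraMap_eq_smul_one] using DFunLike.congr_fun hone x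
  rw [div_mul_eq_mul_div, le_div_iff₀' hpos, one_mul]
  calc |‖z‖ - 1| * ‖resolvent V z x‖
      = |‖z • resolvent V z x‖ - ‖V (resolvent V z x)‖| := by
        rw [norm_smul, hV, ← sub_one_mul, abs_mul, abs_norm]
    _ ≤ ‖z • resolvent V z x - V (resolvent V z x)‖ := abs_norm_sub_norm_le _ _
    _ = ‖x‖ := by rw [hinv]

theorem exists_eigenfunctional_of_isometry_of_countable_spectrum {Z : Type*}
    [NormedAddCommGroup Z] [NormedSpace ℂ Z] [CompleteSpace Z] [Nontrivial Z] {V : Z →L[ℂ] Z}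
    (hV : ∀ x, ‖V x‖ = ‖x‖) (hσ : (spectrum ℂ V ∩ sphere 0 1).Countable) :
    ∃ c : ℂ, ‖c‖ = 1 ∧ ∃ ψ : StrongDual ℂ Z, ψ ≠ 0 ∧ ψ ∘L V = c • ψ := by
  have hM : ∀ z ∈ resolventSet ℂ V, |‖z‖ - 1| * ‖resolvent V z‖ ≤ 1 := fun _ =>
    abs_norm_sub_one_mul_norm_resolvent_le_one hV
  have hV1 : ‖V‖ ≤ 1 := V.opNorm_le_bound zero_le_one fun x => by rw [hV, one_mul]
  have hsphere : spectrum ℂ V ⊆ sphere 0 1 := spectrum_subset_sphere_of_countable hV1 hM hσ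
  rw [inter_eq_left.2 hsphere] at hσ
  obtain ⟨c, hcσ, hc⟩ := exists_mem_not_accPt_of_isClosed_of_countable
    (spectrum.isClosed (𝕜 := ℂ) V) hσ (spectrum.nonempty V)
  have hc1 : ‖c‖ = 1 := mem_sphere_zero_iff_norm.1 (hsphere hcσ)
  obtain ⟨P, hP0, hPV⟩ := exists_ne_zero_mul_eq_smul_of_not_accPt hM
    (norm_ne_zero_iff.1 (hc1 ▸ one_ne_zero)) hcσ hc
  obtain ⟨x, hx⟩ := DFunLike.ne_iff.1 hP0
  obtain ⟨f, hf⟩ := SeparatingDual.exists_ne_zero (R := ℂ) hx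
  refine ⟨c, hc1, f ∘L P, DFunLike.ne_iff.2 ⟨x, hf⟩, ?_⟩
  rw [ContinuousLinearMap.comp_assoc, ← ContinuousLinearMap.mul_def, hPV,
    ContinuousLinearMap.comp_smul]

theorem commute_resolvent {R A : Type*} [CommRing R] [Ring A] [Algebra R A] {a : A} {r : R}
    (hr : r ∈ resolventSet R a) : Commute (resolvent a r) a := by
  rw [spectrum.resolvent_eq hr]
  exact (Commute.sub_left (Algebra.commutes r a) (Commute.refl a)).units_inv_left

section DenseRange

variable {𝕜 X W : Type*} [NontriviallyNormedField 𝕜] [NormedAddCommGroup X] [NormedSpace 𝕜 X]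
  [NormedAddCommGroup W] [NormedSpace 𝕜 W] {J : X →L[𝕜] W}

theorem comp_left_injective_of_denseRange {E : Type*} [NormedAddCommGroup E] [NormedSpace 𝕜 E]
    (hJ : DenseRange J) : Function.Injective fun B : W →L[𝕜] E => B ∘L J := fun B B' h =>
  DFunLike.coe_injective (hJ.equalizer B.continuous B'.continuous (congrArg DFunLike.coe h))

theorem denseRange_codRestrict_topologicalClosure (J : X →L[𝕜] W) :
    DenseRange (J.codRestrict J.range.topologicalClosure fun x =>
      J.range.le_topologicalClosure (LinearMap.mem_range_self _ x)) := by
  refine fun w => closure_subtype.2 (closure_mono ?_ w.2)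
  rintro _ ⟨x, rfl⟩
  exact ⟨_, ⟨x, rfl⟩, rfl⟩

variable [CompleteSpace W]

theorem exists_comp_eq_comp_of_denseRange (hJ : DenseRange J) {B : X →L[𝕜] X} {C : ℝ}
    (hB : ∀ x, ‖J (B x)‖ ≤ C * ‖J x‖) : ∃ B' : W →L[𝕜] W, B' ∘L J = J ∘L B :=
  ⟨(J ∘L B).toLinearMap.extendOfNorm J.toLinearMap, ContinuousLinearMap.ext fun x =>
    LinearMap.extendOfNorm_eq (f := (J ∘L B).toLinearMap) hJ ⟨C, hB⟩ x⟩

theorem spectrum_subset_of_denseRange (hJ : DenseRange J) {T : X →L[𝕜] X} {V : W →L[𝕜] W}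
    (hV : V ∘L J = J ∘L T)
    (hcomm : ∀ B : X →L[𝕜] X, Commute B T → ∀ x, ‖J (B x)‖ ≤ ‖B‖ * ‖J x‖) :
    spectrum 𝕜 V ⊆ spectrum 𝕜 T := by
  intro z hzV hzT
  obtain ⟨R, hR⟩ := exists_comp_eq_comp_of_denseRange hJ (hcomm _ (commute_resolvent hzT))
  have hshift : (algebraMap 𝕜 (W →L[𝕜] W) z - V) ∘L J =
      J ∘L (algebraMap 𝕜 (X →L[𝕜] X) z - T) := by
    simp [Algebra.algebraMap_eq_smul_one, ContinuousLinearMap.sub_comp, hV,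
      ContinuousLinearMap.one_def]
  have hright : (algebraMap 𝕜 (X →L[𝕜] X) z - T) ∘L resolvent T z = .id 𝕜 X :=
    Ring.mul_inverse_cancel _ hzT
  have hleft : resolvent T z ∘L (algebraMap 𝕜 (X →L[𝕜] X) z - T) = .id 𝕜 X :=
    Ring.inverse_mul_cancel _ hzT
  refine hzV (spectrum.mem_resolventSet_of_left_right_inverse (b := R) (c := R)
    (comp_left_injective_of_denseRange hJ ?_) (comp_left_injective_of_denseRange hJ ?_))
  · change (_ ∘L R) ∘L J = .id 𝕜 W ∘L J
    rw [ContinuousLinearMap.comp_assoc, hR, ← ContinuousLinearMap.comp_assoc, hshift,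
      ContinuousLinearMap.comp_assoc, hright, ContinuousLinearMap.comp_id,
      ContinuousLinearMap.id_comp]
  · change (R ∘L _) ∘L J = .id 𝕜 W ∘L J
    rw [ContinuousLinearMap.comp_assoc, hshift, ← ContinuousLinearMap.comp_assoc, hR,
      ContinuousLinearMap.comp_assoc, hleft, ContinuousLinearMap.comp_id,
      ContinuousLinearMap.id_comp]

end DenseRange

section MeanErgodic

variable {𝕜 X : Type*} [RCLike 𝕜] [NormedAddCommGroup X] [NormedSpace 𝕜 X]

theorem exists_forall_tendsto_dual_of_norm_le
    (hrefl : Function.Surjective (NormedSpace.inclusionInDoubleDual 𝕜 X)) {ι : Type*}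
    (U : Ultrafilter ι) {u : ι → X} {C : ℝ} (hu : ∀ i, ‖u i‖ ≤ C) :
    ∃ y, ∀ f : StrongDual 𝕜 X, Tendsto (fun i => f (u i)) U (𝓝 (f y)) := by
  let F : ι → WeakDual 𝕜 (StrongDual 𝕜 X) := fun i =>
    StrongDual.toWeakDual (NormedSpace.inclusionInDoubleDual 𝕜 X (u i))
  have hball := WeakDual.isCompact_closedBall (𝕜 := 𝕜) (E := StrongDual 𝕜 X) 0 C
  obtain ⟨ξ, -, hξ⟩ := hball.ultrafilter_le_nhds (U.map F) <| tendsto_principal.2 <|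
    Eventually.of_forall fun i => by
      simp only [mem_preimage, mem_closedBall, dist_zero_right]
      exact (NormedSpace.double_dual_bound 𝕜 X (u i)).trans (hu i)
  obtain ⟨y, hy⟩ := hrefl (WeakDual.toStrongDual ξ)
  refine ⟨y, fun f => ?_⟩
  have hyf : ξ f = f y := (DFunLike.congr_fun hy f).symm
  exact hyf ▸ ((WeakDual.eval_continuous f).tendsto ξ).comp hξ

theorem norm_birkhoffAverage_le {α : Type*} {f : α → α} {g : α → X} {x : α} {C : ℝ}
    (h : ∀ n, ‖g (f^[n] x)‖ ≤ C) (n : ℕ) : ‖birkhoffAverage 𝕜 f g n x‖ ≤ C := by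
  have hsum : ‖birkhoffSum f g n x‖ ≤ n * C := by
    simpa [birkhoffSum] using norm_sum_le_of_le (Finset.range n) fun k _ => h k
  have hC : 0 ≤ C := (norm_nonneg _).trans (h 0)
  rw [birkhoffAverage, norm_smul, norm_inv, RCLike.norm_natCast]
  exact inv_mul_le_of_le_mul₀ n.cast_nonneg hC hsum

theorem exists_fixedPt_forall_invariant_dual_eq
    (hrefl : Function.Surjective (NormedSpace.inclusionInDoubleDual 𝕜 X)) {S : X →L[𝕜] X}
    {x : X} {C : ℝ} (hC : ∀ n : ℕ, ‖S^[n] x‖ ≤ C) :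
    ∃ y, S y = y ∧ ∀ φ : StrongDual 𝕜 X, φ ∘L S = φ → φ y = φ x := by
  let u : ℕ → X := fun n => birkhoffAverage 𝕜 S id n x
  let U : Ultrafilter ℕ := Ultrafilter.of atTop
  have hU : (U : Filter ℕ) ≤ atTop := Ultrafilter.of_le atTop
  obtain ⟨y, hy⟩ := exists_forall_tendsto_dual_of_norm_le hrefl U (u := u)
    (norm_birkhoffAverage_le hC)
  have hdiff : Tendsto (fun n => S (u n) - u n) U (𝓝 0) := by
    have hb : Bornology.IsBounded (range fun n => id (S^[n] x)) :=
      isBounded_iff_forall_norm_le.2 ⟨C, forall_mem_range.2 hC⟩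
    have hSu : ∀ n, S (u n) = birkhoffAverage 𝕜 S id n (S x) := fun n => by
      simp [u, birkhoffAverage, birkhoffSum,
        ← Function.iterate_succ_apply, Function.iterate_succ_apply']
    simpa only [hSu] using (tendsto_birkhoffAverage_apply_sub_birkhoffAverage 𝕜 hb).mono_left hU
  refine ⟨y, SeparatingDual.eq_iff_forall_dual_eq (R := 𝕜) |>.2 fun f => ?_, fun φ hφ => ?_⟩
  · have hfdiff : Tendsto (fun n => f (S (u n)) - f (u n)) U (𝓝 0) := by
      simpa [Function.comp_def] using (f.continuous.tendsto 0).comp hdiff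
    exact sub_eq_zero.1 (tendsto_nhds_unique ((hy (f ∘L S)).sub (hy f)) hfdiff)
  · have hφu : ∀ᶠ n in U, φ (u n) = φ x := by
      filter_upwards [hU (eventually_ne_atTop 0)] with n hn
      have hφS : φ ∘ S = φ := congrArg DFunLike.coe hφ
      rw [map_birkhoffAverage 𝕜 𝕜 φ, Function.comp_id,
        birkhoffAverage_of_comp_eq 𝕜 hφS (Nat.cast_ne_zero.2 hn)]
    exact tendsto_nhds_unique (hy φ) (tendsto_const_nhds.congr' (hφu.mono fun _ h => h.symm))

theorem eq_zero_of_comp_eq_smul_of_forall_eigenvector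
    (hrefl : Function.Surjective (NormedSpace.inclusionInDoubleDual 𝕜 X)) {T : X →L[𝕜] X}
    {C : ℝ} (hC : ∀ n : ℕ, ‖T ^ n‖ ≤ C) {c : 𝕜} (hc : ‖c‖ = 1) {φ : StrongDual 𝕜 X}
    (hφ : φ ∘L T = c • φ) (h0 : ∀ y, T y = c • y → φ y = 0) : φ = 0 := by
  have hc0 : c ≠ 0 := norm_ne_zero_iff.1 (hc ▸ one_ne_zero)
  ext x
  have hS : ∀ n : ℕ, ‖(c⁻¹ • T)^[n] x‖ ≤ C * ‖x‖ := fun n => by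
    rw [← FunLike.coe_pow_eq_iterate, smul_pow]
    refine ContinuousLinearMap.le_of_opNorm_le _ ?_ x
    simpa [norm_smul, hc] using hC n
  obtain ⟨y, hy, hinv⟩ := exists_fixedPt_forall_invariant_dual_eq hrefl hS
  have hφS : φ ∘L (c⁻¹ • T) = φ := by
    rw [ContinuousLinearMap.comp_smul, hφ, inv_smul_smul₀ hc0]
  have hTy : T y = c • y := (inv_smul_eq_iff₀ hc0).1 hy
  rw [← hinv φ hφS, h0 y hTy, zero_apply]

end MeanErgodic

section OrbitClass

variable {𝕜 X : Type*} [NontriviallyNormedField 𝕜] [NormedAddCommGroup X] [NormedSpace 𝕜 X]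

theorem norm_mkQL_apply_le {E F : Type*} [SeminormedAddCommGroup E] [NormedSpace 𝕜 E]
    [SeminormedAddCommGroup F] [NormedSpace 𝕜 F] {S : Submodule 𝕜 E} {S' : Submodule 𝕜 F}
    {Φ : E →L[𝕜] F} {K : ℝ} (hK : ‖Φ‖ ≤ K) (hΦ : ∀ f ∈ S, Φ f ∈ S') (f : E) :
    ‖S'.mkQL (Φ f)‖ ≤ K * ‖S.mkQL f‖ := by
  refine le_mul_of_forall_lt₀ fun a ha b hb => ?_
  obtain ⟨g, hgf, hgb⟩ := QuotientAddGroup.norm_lt_iff.1 hb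
  have hclass : S'.mkQL (Φ g) = S'.mkQL (Φ f) := by
    refine (Submodule.Quotient.eq S').2 ?_
    rw [← map_sub]
    exact hΦ _ ((Submodule.Quotient.eq S).1 hgf)
  calc ‖S'.mkQL (Φ f)‖ = ‖S'.mkQL (Φ g)‖ := by rw [hclass]
    _ ≤ ‖Φ g‖ := Submodule.Quotient.norm_mk_le _ _
    _ ≤ a * b := Φ.le_of_opNorm_le_of_le (hK.trans ha.le) hgb.le

variable (𝕜 X) in
/-- The bounded continuous functions `α → X` with relatively compact range. -/
def relCompactRange (α : Type*) [TopologicalSpace α] : Submodule 𝕜 (α →ᵇ X) where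
  carrier := {f | IsCompact (closure (range f))}
  add_mem' hf hg := (hf.add hg).closure_of_subset <| range_subset_iff.2 fun n =>
    add_mem_add (subset_closure ⟨n, rfl⟩) (subset_closure ⟨n, rfl⟩)
  zero_mem' := isCompact_singleton.closure_of_subset (range_subset_iff.2 fun _ => rfl)
  smul_mem' c _ hf := (hf.smul c).closure_of_subset <| range_subset_iff.2 fun n =>
    smul_mem_smul_set (subset_closure ⟨n, rfl⟩)

theorem mem_relCompactRange_of_subset {α : Type*} [TopologicalSpace α] {f : α →ᵇ X} {K : Set X}
    (hK : IsCompact K) (hf : ∀ n, f n ∈ K) : f ∈ relCompactRange 𝕜 X α :=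
  hK.closure_of_subset (range_subset_iff.2 hf)

instance isClosed_relCompactRange {α : Type*} [TopologicalSpace α] [CompleteSpace X] :
    IsClosed (relCompactRange 𝕜 X α : Set (α →ᵇ X)) := by
  refine isClosed_of_closure_subset fun f hf => ?_
  suffices TotallyBounded (range f) from this.closure.isCompact_of_isClosed isClosed_closure
  refine Metric.totallyBounded_iff.2 fun ε hε => ?_
  obtain ⟨g, hg, hfg⟩ := Metric.mem_closure_iff.1 hf (ε / 2) (half_pos hε)
  obtain ⟨t, ht, hgt⟩ := Metric.totallyBounded_iff.1 (hg.totallyBounded.subset subset_closure)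
    (ε / 2) (half_pos hε)
  refine ⟨t, ht, range_subset_iff.2 fun n => ?_⟩
  obtain ⟨y, hy, hgy⟩ := mem_iUnion₂.1 (hgt ⟨n, rfl⟩)
  have hfgn : dist (f n) (g n) < ε / 2 :=
    (BoundedContinuousFunction.dist_coe_le_dist n).trans_lt hfg
  exact mem_iUnion₂.2 ⟨y, hy, (dist_triangle _ (g n) _).trans_lt (by linarith [mem_ball.1 hgy])⟩

theorem norm_mkQL_compContinuous_le {α β : Type*} [TopologicalSpace α] [TopologicalSpace β]
    (g : C(β, α)) (f : α →ᵇ X) :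
    ‖(relCompactRange 𝕜 X β).mkQL (f.compContinuous g)‖ ≤ ‖(relCompactRange 𝕜 X α).mkQL f‖ := by
  let Φ := BoundedContinuousFunction.compContinuousCLM X 𝕜 g
  have hΦ : ∀ h ∈ relCompactRange 𝕜 X α, Φ h ∈ relCompactRange 𝕜 X β := fun h hh =>
    mem_relCompactRange_of_subset hh fun n => subset_closure ⟨g n, rfl⟩
  have hnorm : ‖Φ‖ ≤ 1 := LinearMap.mkContinuous_norm_le _ zero_le_one _
  exact (norm_mkQL_apply_le hnorm hΦ f).trans_eq (one_mul _)

theorem norm_mkQL_compLeftContinuousBounded_le {α Y : Type*} [TopologicalSpace α]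
    [NormedAddCommGroup Y] [NormedSpace 𝕜 Y] (B : X →L[𝕜] Y) (f : α →ᵇ X) :
    ‖(relCompactRange 𝕜 Y α).mkQL (B.compLeftContinuousBounded α f)‖ ≤
      ‖B‖ * ‖(relCompactRange 𝕜 X α).mkQL f‖ := by
  have hΦ : ∀ h ∈ relCompactRange 𝕜 X α,
      B.compLeftContinuousBounded α h ∈ relCompactRange 𝕜 Y α := fun h hh =>
    mem_relCompactRange_of_subset (hh.image B.continuous) fun n =>
      mem_image_of_mem B (subset_closure ⟨n, rfl⟩)
  exact norm_mkQL_apply_le (LinearMap.mkContinuous_norm_le _ (norm_nonneg B) _) hΦ f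

variable {T : X →L[𝕜] X} {C : ℝ}

/-- The linear map sending `x` to its orbit `n ↦ Tⁿ x` under a power-bounded operator `T`. -/
noncomputable def orbitMap (hC : ∀ n : ℕ, ‖T ^ n‖ ≤ C) : X →L[𝕜] ℕ →ᵇ X :=
  LinearMap.mkContinuous
    { toFun x := .ofNormedAddCommGroupDiscrete (fun n : ℕ => (T ^ n) x) (C * ‖x‖) fun n =>
        (T ^ n).le_of_opNorm_le (hC n) x
      map_add' x y := by ext n; simp
      map_smul' c x := by ext n; simp }
    C fun x => BoundedContinuousFunction.norm_ofNormedAddCommGroup_le _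
      (mul_nonneg ((norm_nonneg _).trans (hC 0)) (norm_nonneg x)) fun n =>
        (T ^ n).le_of_opNorm_le (hC n) x

@[simp]
theorem orbitMap_apply (hC : ∀ n : ℕ, ‖T ^ n‖ ≤ C) (x : X) (n : ℕ) :
    orbitMap hC x n = (T ^ n) x := rfl

/-- The class of the orbit of `x` modulo sequences with relatively compact range. Its kernel
consists of the almost periodic vectors. -/
noncomputable def orbitClass (hC : ∀ n : ℕ, ‖T ^ n‖ ≤ C) :
    X →L[𝕜] (ℕ →ᵇ X) ⧸ relCompactRange 𝕜 X ℕ :=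
  (relCompactRange 𝕜 X ℕ).mkQL ∘L orbitMap hC

variable (hC : ∀ n : ℕ, ‖T ^ n‖ ≤ C)

theorem orbitClass_eq_zero_iff {x : X} :
    orbitClass hC x = 0 ↔ IsCompact (closure (range fun n : ℕ => (T ^ n) x)) :=
  Submodule.Quotient.mk_eq_zero _

theorem norm_orbitClass_map (x : X) : ‖orbitClass hC (T x)‖ = ‖orbitClass hC x‖ := by
  apply le_antisymm
  · have hsucc : orbitMap hC (T x) = (orbitMap hC x).compContinuous ⟨Nat.succ, by fun_prop⟩ := by
      ext n
      simp [pow_succ]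
    rw [orbitClass, ContinuousLinearMap.comp_apply, hsucc]
    exact norm_mkQL_compContinuous_le _ _
  · let g : ℕ →ᵇ X := (orbitMap hC (T x)).compContinuous ⟨Nat.pred, by fun_prop⟩
    have hg : orbitMap hC x - g ∈ relCompactRange 𝕜 X ℕ := by
      refine mem_relCompactRange_of_subset (Set.toFinite {x - T x, 0}).isCompact fun n => ?_
      cases n <;> simp [g, pow_succ]
    have hclass : orbitClass hC x = (relCompactRange 𝕜 X ℕ).mkQL g :=
      (Submodule.Quotient.eq _).2 hg
    rw [hclass]
    exact norm_mkQL_compContinuous_le _ _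

theorem norm_orbitClass_apply_le_of_commute {B : X →L[𝕜] X} (hB : Commute B T) (x : X) :
    ‖orbitClass hC (B x)‖ ≤ ‖B‖ * ‖orbitClass hC x‖ := by
  have hBx : orbitMap hC (B x) = B.compLeftContinuousBounded ℕ (orbitMap hC x) := by
    ext n
    exact DFunLike.congr_fun (hB.pow_right n).eq.symm x
  rw [orbitClass, ContinuousLinearMap.comp_apply, hBx]
  exact norm_mkQL_compLeftContinuousBounded_le B _

theorem orbitClass_eq_zero_of_eigenvector {c : 𝕜} [ProperSpace 𝕜] (hc : ‖c‖ = 1) {x : X}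
    (hx : T x = c • x) : orbitClass hC x = 0 := by
  have hpow : ∀ n : ℕ, (T ^ n) x = c ^ n • x := fun n => by
    induction n with
    | zero => simp
    | succ n ih => simp [pow_succ, hx, ih, smul_smul, mul_comm]
  refine (orbitClass_eq_zero_iff hC).2 <| ((isCompact_sphere (0 : 𝕜) 1).image
    (by fun_prop : Continuous fun a : 𝕜 => a • x)).closure_of_subset ?_
  exact range_subset_iff.2 fun n => ⟨c ^ n, by simp [hc], (hpow n).symm⟩

end OrbitClass

section Intertwining

variable {X W : Type*} [NormedAddCommGroup X] [NormedSpace ℂ X] [NormedAddCommGroup W]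
  [NormedSpace ℂ W] [CompleteSpace W] {T : X →L[ℂ] X} {J : X →L[ℂ] W}

theorem exists_eigenfunctional_of_denseRange_of_countable_spectrum [Nontrivial W]
    (hσ : (spectrum ℂ T ∩ sphere 0 1).Countable) (hJ : DenseRange J)
    (hT : ∀ x, ‖J (T x)‖ = ‖J x‖)
    (hcomm : ∀ B : X →L[ℂ] X, Commute B T → ∀ x, ‖J (B x)‖ ≤ ‖B‖ * ‖J x‖) :
    ∃ c : ℂ, ‖c‖ = 1 ∧ ∃ ψ : StrongDual ℂ W, ψ ≠ 0 ∧ (ψ ∘L J) ∘L T = c • ψ ∘L J := by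
  obtain ⟨V, hV⟩ := exists_comp_eq_comp_of_denseRange hJ (hcomm T (.refl T))
  have hVisom : ∀ w, ‖V w‖ = ‖w‖ := fun w =>
    hJ.induction_on w (isClosed_eq (by fun_prop) (by fun_prop)) fun x => by
      rw [← hT x, ← ContinuousLinearMap.comp_apply V, hV, ContinuousLinearMap.comp_apply]
  have hσV : (spectrum ℂ V ∩ sphere 0 1).Countable :=
    hσ.mono (inter_subset_inter_left _ (spectrum_subset_of_denseRange hJ hV hcomm))
  obtain ⟨c, hc, ψ, hψ, hψV⟩ :=
    exists_eigenfunctional_of_isometry_of_countable_spectrum hVisom hσV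
  refine ⟨c, hc, ψ, hψ, ?_⟩
  rw [ContinuousLinearMap.comp_assoc, ← hV, ← ContinuousLinearMap.comp_assoc, hψV,
    ContinuousLinearMap.smul_comp]

theorem eq_zero_of_countable_spectrum_of_forall_eigenvector
    (hσ : (spectrum ℂ T ∩ sphere 0 1).Countable)
    (hsep : ∀ c : ℂ, ‖c‖ = 1 → ∀ φ : StrongDual ℂ X, φ ∘L T = c • φ →
      (∀ y, T y = c • y → φ y = 0) → φ = 0)
    (hT : ∀ x, ‖J (T x)‖ = ‖J x‖)
    (hcomm : ∀ B : X →L[ℂ] X, Commute B T → ∀ x, ‖J (B x)‖ ≤ ‖B‖ * ‖J x‖)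
    (heig : ∀ c : ℂ, ‖c‖ = 1 → ∀ x, T x = c • x → J x = 0) : J = 0 := by
  let J' : X →L[ℂ] J.range.topologicalClosure := J.codRestrict _ fun x =>
    J.range.le_topologicalClosure (LinearMap.mem_range_self _ x)
  have hJ' : DenseRange J' := denseRange_codRestrict_topologicalClosure J
  have : CompleteSpace J.range.topologicalClosure :=
    J.range.isClosed_topologicalClosure.completeSpace_coe
  by_contra hJ0
  obtain ⟨x₀, hx₀⟩ := DFunLike.ne_iff.1 hJ0
  have : Nontrivial J.range.topologicalClosure :=
    ⟨J' x₀, 0, fun h => hx₀ (congrArg Subtype.val h)⟩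
  obtain ⟨c, hc, ψ, hψ, hψT⟩ :=
    exists_eigenfunctional_of_denseRange_of_countable_spectrum hσ hJ' hT hcomm
  refine hψ (comp_left_injective_of_denseRange hJ' ?_)
  change ψ ∘L J' = 0 ∘L J'
  rw [ContinuousLinearMap.zero_comp]
  refine hsep c hc _ hψT fun y hy => ?_
  have hJ'y : J' y = 0 := Subtype.ext (heig c hc y hy)
  rw [ContinuousLinearMap.comp_apply, hJ'y, map_zero]

end Intertwining

theorem almostPeriodic_of_powerBounded_reflexive_countable_unimodular_spectrum_general
    {X : Type*} [NormedAddCommGroup X] [NormedSpace ℂ X] [CompleteSpace X]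
    (T : X →L[ℂ] X) (hpb : ∃ C : ℝ, ∀ n : ℕ, ‖T ^ n‖ ≤ C)
    (hσ : (spectrum ℂ T ∩ {lam : ℂ | ‖lam‖ = 1}).Countable)
    (hsep : ∀ c : ℂ, ‖c‖ = 1 → ∀ φ : StrongDual ℂ X, φ ∘L T = c • φ →
      (∀ y, T y = c • y → φ y = 0) → φ = 0) :
    ∀ x : X, IsCompact (closure (Set.range (fun n : ℕ => (T ^ n) x))) := by
  obtain ⟨C, hC⟩ := hpb
  have hcircle : {lam : ℂ | ‖lam‖ = 1} = sphere 0 1 := by ext; simp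
  have hzero : orbitClass hC = 0 := eq_zero_of_countable_spectrum_of_forall_eigenvector
    (hcircle ▸ hσ) hsep (norm_orbitClass_map hC)
    (fun _ hB => norm_orbitClass_apply_le_of_commute hC hB)
    (fun _ hc _ => orbitClass_eq_zero_of_eigenvector hC hc)
  exact fun x => (orbitClass_eq_zero_iff hC).1 (DFunLike.congr_fun hzero x)

/-- A power-bounded operator on a reflexive complex Banach space whose
spectrum meets the unit circle in a countable set is almost periodic: every orbit is
relatively compact in the norm topology. -/
theorem almostPeriodic_of_powerBounded_reflexive_countable_unimodular_spectrum
    {X : Type*} [NormedAddCommGroup X] [NormedSpace ℂ X] [CompleteSpace X]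
    (hrefl : Function.Bijective (NormedSpace.inclusionInDoubleDual ℂ X))
    (T : X →L[ℂ] X) (hpb : ∃ C : ℝ, ∀ n : ℕ, ‖T ^ n‖ ≤ C)
    (hσ : (spectrum ℂ T ∩ {lam : ℂ | ‖lam‖ = 1}).Countable) :
    ∀ x : X, IsCompact (closure (Set.range (fun n : ℕ => (T ^ n) x))) :=
  almostPeriodic_of_powerBounded_reflexive_countable_unimodular_spectrum_general T hpb hσ
    fun _ hc _ => eq_zero_of_comp_eq_smul_of_forall_eigenvector hrefl.2 hpb.choose_spec hc
end

section
/- Let X be a Banach space over 𝕜 (𝕜 = ℝ or ℂ), and let T be a weakly almost periodic operator on X of the form T = α·I + S with α ∈ 𝕜 and S^k compact for some k ≥ 1. Then T is almost periodic: for every x ∈ X the orbit {Tⁿ x : n ≥ 0} is relatively compact in the norm topology. -/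
/-!
Almost periodic vectors form a closed `T`-invariant subspace `A`. The weak closure of the orbit of
`x` contains a minimal set `M` for `T`. Since `M` is weakly compact and norm-separable, Baire
gives, for every `δ > 0`, a nonempty relatively weakly open piece of `M` inside a norm ball of
radius `δ`; by minimality every orbit in `M` returns to this piece with bounded gaps, so `M ⊆ A`.
Hence `0` is a weak cluster point of the orbit of `x` in `X ⧸ A`. If `p(T)` is compact then
`p(T) x ∈ A`, so this orbit spans a finite-dimensional space when `p ≠ 0`, and `0` is even a norm
cluster point: some `Tⁿ x` is arbitrarily close to `A`, which by power-boundedness forces `x ∈ A`.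
For `T = α + S` take `p = (X - α)ᵏ`.
-/

open Function Metric Polynomial Set TopologicalSpace

section Polynomials

theorem commute_aeval_self {R A : Type*} [CommSemiring R] [Semiring A] [Algebra R A] (a : A)
    (p : R[X]) : Commute (aeval a p) a := by
  simpa using (commute_X p).symm.map (aeval a)

theorem finiteDimensional_range_of_forall_mul_eq_zero {K V : Type*} [Field K] [AddCommGroup V]
    [Module K V] (φ : K[X] →ₗ[K] V) {p : K[X]} (hp : p ≠ 0) (hφ : ∀ q, φ (p * q) = 0) :
    FiniteDimensional K φ.range := by
  have : FiniteDimensional K (degreeLT K p.natDegree) :=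
    (degreeLTEquiv K p.natDegree).symm.finiteDimensional
  refine Submodule.finiteDimensional_of_le (S₂ := (degreeLT K p.natDegree).map φ) ?_
  rintro _ ⟨q, rfl⟩
  refine ⟨q % p, ?_, ?_⟩
  · rw [SetLike.mem_coe, mem_degreeLT, ← degree_eq_natDegree hp]
    exact EuclideanDomain.mod_lt q hp
  · rw [← add_zero (φ (q % p)), ← hφ (q / p), ← map_add, EuclideanDomain.mod_add_div]

end Polynomials

section MinimalSets

variable {Y : Type*} [TopologicalSpace Y] {f : Y → Y} {K M : Set Y}

/-- Minimal sets of the discrete dynamical system `f`: those nonempty closed forward-invariant sets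
that contain no smaller one. -/
def IsMinimalSet (f : Y → Y) (M : Set Y) : Prop :=
  Minimal (fun s => s.Nonempty ∧ IsClosed s ∧ MapsTo f s s) M

theorem mapsTo_closure_range_iterate (hf : Continuous f) (y : Y) :
    MapsTo f (closure (range fun n => f^[n] y)) (closure (range fun n => f^[n] y)) := by
  refine MapsTo.closure ?_ hf
  rintro _ ⟨n, rfl⟩
  exact ⟨n + 1, iterate_succ_apply' f n y⟩

theorem exists_isMinimalSet_subset (hK : IsCompact K) (hKc : IsClosed K) (hKne : K.Nonempty)
    (hfK : MapsTo f K K) : ∃ M ⊆ K, IsMinimalSet f M := by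
  let P : Set (Set Y) := {s | (s.Nonempty ∧ IsClosed s ∧ MapsTo f s s) ∧ s ⊆ K}
  have hchain : ∀ c ⊆ P, IsChain (· ⊆ ·) c → c.Nonempty → ∃ lb ∈ P, ∀ s ∈ c, lb ⊆ s := by
    intro c hcP hc hcne
    have hdir : DirectedOn (· ⊇ ·) c := fun s hs t ht =>
      (hc.total hs ht).elim (fun h => ⟨s, hs, Subset.rfl, h⟩) fun h => ⟨t, ht, h, Subset.rfl⟩
    have := hcne.to_subtype
    obtain ⟨s₀, hs₀⟩ := hcne
    refine ⟨⋂₀ c, ⟨⟨?_, isClosed_sInter fun s hs => (hcP hs).1.2.1,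
      fun y hy s hs => (hcP hs).1.2.2 (hy s hs)⟩, (sInter_subset_of_mem hs₀).trans (hcP hs₀).2⟩,
      fun s => sInter_subset_of_mem⟩
    exact IsCompact.nonempty_sInter_of_directed_nonempty_isCompact_isClosed hdir
      (fun s hs => (hcP hs).1.1) (fun s hs => hK.of_isClosed_subset (hcP hs).1.2.1 (hcP hs).2)
      fun s hs => (hcP hs).1.2.1
  obtain ⟨M, hMK, ⟨hM, -⟩, hmin⟩ := zorn_superset_nonempty P hchain K ⟨⟨hKne, hKc, hfK⟩, Subset.rfl⟩
  exact ⟨M, hMK, hM, fun s hs hsM => hmin ⟨hs, hsM.trans hMK⟩ hsM⟩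

namespace IsMinimalSet

theorem subset_closure_range_iterate (hM : IsMinimalSet f M) (hf : Continuous f) {y : Y}
    (hy : y ∈ M) : M ⊆ closure (range fun n => f^[n] y) := by
  refine hM.2 ⟨⟨y, subset_closure ⟨0, rfl⟩⟩, isClosed_closure, mapsTo_closure_range_iterate hf y⟩
    (closure_minimal ?_ hM.1.2.1)
  rintro _ ⟨n, rfl⟩
  exact hM.1.2.2.iterate n hy

theorem exists_forall_exists_iterate_mem (hM : IsMinimalSet f M) (hf : Continuous f)
    (hMc : IsCompact M) {U : Set Y} (hU : IsOpen U) (hMU : (M ∩ U).Nonempty) :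
    ∃ N, ∀ y ∈ M, ∃ n < N, f^[n] y ∈ U := by
  obtain ⟨t, ht⟩ := hMc.elim_finite_subcover (fun n => f^[n] ⁻¹' U)
    (fun n => hU.preimage (hf.iterate n)) fun y hy => by
      obtain ⟨z, hzM, hzU⟩ := hMU
      obtain ⟨_, hU', n, rfl⟩ := mem_closure_iff.1
        (hM.subset_closure_range_iterate hf hy hzM) U hU hzU
      exact mem_iUnion.2 ⟨n, hU'⟩
  obtain ⟨N, hN⟩ := t.exists_nat_subset_range
  refine ⟨N, fun y hy => ?_⟩
  obtain ⟨n, hnt, hn⟩ := mem_iUnion₂.1 (ht hy)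
  exact ⟨n, Finset.mem_range.1 (hN hnt), hn⟩

end IsMinimalSet

theorem exists_isOpen_inter_subset_of_subset_iUnion [T2Space Y] {ι : Type*} [Countable ι]
    (hM : IsCompact M) (hMne : M.Nonempty) {F : ι → Set Y} (hF : ∀ i, IsClosed (F i))
    (hMF : M ⊆ ⋃ i, F i) : ∃ i U, IsOpen U ∧ (M ∩ U).Nonempty ∧ M ∩ U ⊆ F i := by
  have := isCompact_iff_compactSpace.1 hM
  have := hMne.to_subtype
  obtain ⟨i, z, hz⟩ := nonempty_interior_of_iUnion_of_closed
    (f := fun i => ((↑) : M → Y) ⁻¹' F i) (fun i => (hF i).preimage continuous_subtype_val)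
    (by rwa [← preimage_iUnion, preimage_eq_univ_iff, Subtype.range_coe])
  obtain ⟨V, hVF, ⟨U, hU, rfl⟩, hzU⟩ := mem_interior.1 hz
  exact ⟨i, U, hU, ⟨z, z.2, hzU⟩, fun y hy => hVF (a := ⟨y, hy.1⟩) hy.2⟩

end MinimalSets

section WeakTopology

variable {𝕜 : Type*} [RCLike 𝕜] {X : Type*} [NormedAddCommGroup X] [NormedSpace 𝕜 X]

theorem iterate_weakSpaceMap_toWeakSpace (T : X →L[𝕜] X) (n : ℕ) (x : X) :
    (WeakSpace.map T)^[n] (toWeakSpace 𝕜 X x) = toWeakSpace 𝕜 X ((T ^ n) x) := by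
  rw [FunLike.coe_pow_eq_iterate]
  rfl

theorem toWeakSpace_apply_mem_closure {Y : Type*} [NormedAddCommGroup Y] [NormedSpace 𝕜 Y]
    (L : X →L[𝕜] Y) {s : Set X} {x : X}
    (hx : toWeakSpace 𝕜 X x ∈ closure (toWeakSpace 𝕜 X '' s)) :
    toWeakSpace 𝕜 Y (L x) ∈ closure (toWeakSpace 𝕜 Y '' (L '' s)) := by
  change WeakSpace.map L (toWeakSpace 𝕜 X x) ∈ _
  refine map_mem_closure (WeakSpace.map L).continuous hx ?_
  rintro _ ⟨y, hy, rfl⟩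
  exact ⟨L y, ⟨y, hy, rfl⟩, rfl⟩

theorem isClosed_toWeakSpace_image_closedBall (x : X) (r : ℝ) :
    IsClosed (toWeakSpace 𝕜 X '' closedBall x r) := by
  let _ : NormedSpace ℝ X := .restrictScalars ℝ 𝕜 X
  rw [← isClosed_closedBall.closure_eq, (convex_closedBall x r).toWeakSpace_closure 𝕜]
  exact isClosed_closure

theorem toWeakSpace_image_closure_submodule (V : Submodule 𝕜 X) :
    toWeakSpace 𝕜 X '' closure V = closure (toWeakSpace 𝕜 X '' V) := by
  let _ : NormedSpace ℝ X := .restrictScalars ℝ 𝕜 X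
  exact (V.restrictScalars ℝ).convex.toWeakSpace_closure 𝕜

theorem isSeparable_preimage_toWeakSpace_closure {s : Set X} (hs : IsSeparable s) :
    IsSeparable (toWeakSpace 𝕜 X ⁻¹' closure (toWeakSpace 𝕜 X '' s)) := by
  refine (hs.span (R := 𝕜)).closure.mono fun x hx => ?_
  have : toWeakSpace 𝕜 X x ∈ toWeakSpace 𝕜 X '' closure (Submodule.span 𝕜 s) := by
    rw [toWeakSpace_image_closure_submodule]
    exact closure_mono (image_mono Submodule.subset_span) hx
  rwa [(toWeakSpace 𝕜 X).injective.mem_set_image] at this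

theorem continuous_comp_toWeakSpace_symm {F : Type*} [NormedAddCommGroup F] [NormedSpace 𝕜 F]
    [FiniteDimensional 𝕜 F] (L : X →L[𝕜] F) :
    Continuous fun x : WeakSpace 𝕜 X => L ((toWeakSpace 𝕜 X).symm x) :=
  have : FiniteDimensional 𝕜 (WeakSpace 𝕜 F) := (toWeakSpace 𝕜 F).finiteDimensional
  (LinearMap.continuous_of_finiteDimensional (toWeakSpace 𝕜 F).symm.toLinearMap).comp
    (WeakSpace.map L).continuous

theorem mem_closure_of_toWeakSpace_mem_closure (V : Submodule 𝕜 X) [FiniteDimensional 𝕜 V]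
    {s : Set X} (hs : s ⊆ V) {x : X} (hx : toWeakSpace 𝕜 X x ∈ closure (toWeakSpace 𝕜 X '' s)) :
    x ∈ closure s := by
  obtain ⟨P, hP⟩ := Submodule.ClosedComplemented.of_finiteDimensional V
  have hxV : x ∈ V := by
    have : toWeakSpace 𝕜 X x ∈ toWeakSpace 𝕜 X '' closure V := by
      rw [toWeakSpace_image_closure_submodule]
      exact closure_mono (image_mono hs) hx
    rwa [V.closed_of_finiteDimensional.closure_eq, (toWeakSpace 𝕜 X).injective.mem_set_image]
      at this
  have hPs : MapsTo (fun y : WeakSpace 𝕜 X => (P ((toWeakSpace 𝕜 X).symm y) : X))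
      (toWeakSpace 𝕜 X '' s) s := by
    rintro _ ⟨y, hy, rfl⟩
    simpa [hP ⟨y, hs hy⟩] using hy
  simpa [hP ⟨x, hxV⟩] using
    map_mem_closure (continuous_subtype_val.comp (continuous_comp_toWeakSpace_symm P)) hx hPs

theorem exists_norm_le_of_isCompact_closure_toWeakSpace_image {s : Set X}
    (hs : IsCompact (closure (toWeakSpace 𝕜 X '' s))) : ∃ C, ∀ x ∈ s, ‖x‖ ≤ C := by
  obtain ⟨C, hC⟩ := banach_steinhaus
    (g := fun x : s => NormedSpace.inclusionInDoubleDual 𝕜 X x) fun φ => by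
      obtain ⟨C, hC⟩ := (hs.image (continuous_comp_toWeakSpace_symm φ)).isBounded.exists_norm_le
      exact ⟨C, fun x => hC _ ⟨_, subset_closure ⟨x, x.2, rfl⟩, by simp⟩⟩
  exact ⟨C, fun x hx =>
    ((NormedSpace.inclusionInDoubleDualLi (𝕜 := 𝕜) (E := X)).norm_map x).symm.trans_le (hC ⟨x, hx⟩)⟩

theorem exists_forall_norm_pow_le [CompleteSpace X] {T : X →L[𝕜] X}
    (hT : ∀ x, IsCompact (closure (toWeakSpace 𝕜 X '' range fun n : ℕ => (T ^ n) x))) :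
    ∃ C, ∀ n : ℕ, ‖T ^ n‖ ≤ C :=
  banach_steinhaus fun x =>
    (exists_norm_le_of_isCompact_closure_toWeakSpace_image (hT x)).imp fun _ hC n => hC _ ⟨n, rfl⟩

end WeakTopology

section AlmostPeriodicVectors

theorem isCompact_closure_range_of_forall_exists_dist_lt {X : Type*} [PseudoMetricSpace X]
    [CompleteSpace X] {u : ℕ → X}
    (h : ∀ ε > 0, ∃ m t, TotallyBounded t ∧ ∀ n, ∃ y ∈ t, dist (u (n + m)) y < ε) :
    IsCompact (closure (range u)) := by
  suffices TotallyBounded (range u) from this.closure.isCompact_of_isClosed isClosed_closure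
  refine totallyBounded_iff.2 fun ε hε => ?_
  obtain ⟨m, t, ht, htu⟩ := h (ε / 2) (half_pos hε)
  obtain ⟨c, hc, htc⟩ := totallyBounded_iff.1 ht (ε / 2) (half_pos hε)
  refine ⟨u '' Iio m ∪ c, ((finite_Iio m).image u).union hc, ?_⟩
  rintro _ ⟨n, rfl⟩
  rcases lt_or_ge n m with hn | hn
  · exact mem_biUnion (Or.inl ⟨n, hn, rfl⟩) (mem_ball_self hε)
  · obtain ⟨y, hy, hny⟩ := htu (n - m)
    obtain ⟨z, hz, hyz⟩ := mem_iUnion₂.1 (htc hy)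
    rw [Nat.sub_add_cancel hn] at hny
    exact mem_biUnion (Or.inr hz) <|
      add_halves ε ▸ (dist_triangle _ y z).trans_lt (add_lt_add hny hyz)

variable {𝕜 : Type*} [NontriviallyNormedField 𝕜] {X : Type*} [NormedAddCommGroup X]
  [NormedSpace 𝕜 X] {T : X →L[𝕜] X} {C : ℝ}

/-- The almost periodic vectors of `T`: those whose orbit is relatively compact in norm. -/
def almostPeriodicVectors (T : X →L[𝕜] X) : Submodule 𝕜 X where
  carrier := {x | IsCompact (closure (range fun n : ℕ => (T ^ n) x))}
  zero_mem' := by simp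
  add_mem' {x y} hx hy := by
    refine ((hx.prod hy).image continuous_add).closure_of_subset ?_
    rintro _ ⟨n, rfl⟩
    exact ⟨((T ^ n) x, (T ^ n) y), ⟨subset_closure ⟨n, rfl⟩, subset_closure ⟨n, rfl⟩⟩, by simp⟩
  smul_mem' c x hx := by
    refine (hx.image (continuous_const_smul c)).closure_of_subset ?_
    rintro _ ⟨n, rfl⟩
    exact ⟨(T ^ n) x, subset_closure ⟨n, rfl⟩, by simp⟩

theorem apply_pow_apply_of_commute {A : X →L[𝕜] X} (hA : Commute A T) (n : ℕ) (x : X) :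
    A ((T ^ n) x) = (T ^ n) (A x) :=
  DFunLike.congr_fun (hA.pow_right n).eq x

theorem apply_mem_almostPeriodicVectors_of_commute {A : X →L[𝕜] X} (hA : Commute A T) {x : X}
    (hx : x ∈ almostPeriodicVectors T) : A x ∈ almostPeriodicVectors T := by
  refine (hx.image A.continuous).closure_of_subset ?_
  rintro _ ⟨n, rfl⟩
  exact ⟨(T ^ n) x, subset_closure ⟨n, rfl⟩, apply_pow_apply_of_commute hA n x⟩

theorem apply_mem_almostPeriodicVectors_of_isCompactOperator {A : X →L[𝕜] X}
    (hAc : IsCompactOperator A) (hA : Commute A T) (hT : ∀ n : ℕ, ‖T ^ n‖ ≤ C) (x : X) :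
    A x ∈ almostPeriodicVectors T := by
  refine (hAc.isCompact_closure_image_closedBall (𝕜₁ := 𝕜) (C * ‖x‖)).closure_of_subset ?_
  rintro _ ⟨n, rfl⟩
  exact subset_closure ⟨(T ^ n) x, mem_closedBall_zero_iff.2 ((T ^ n).le_of_opNorm_le (hT n) x),
    apply_pow_apply_of_commute hA n x⟩

theorem exists_pos_forall_norm_pow_apply_lt (hT : ∀ n : ℕ, ‖T ^ n‖ ≤ C) {ε : ℝ} (hε : 0 < ε) :
    ∃ δ > 0, ∀ (n : ℕ) (x : X), ‖x‖ ≤ δ → ‖(T ^ n) x‖ < ε := by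
  have hC : 0 ≤ C := (norm_nonneg _).trans (hT 0)
  refine ⟨ε / (C + 1), by positivity, fun n x hx => ?_⟩
  calc ‖(T ^ n) x‖ ≤ C * ‖x‖ := (T ^ n).le_of_opNorm_le (hT n) x
    _ ≤ C * (ε / (C + 1)) := by gcongr
    _ < (C + 1) * (ε / (C + 1)) := by gcongr; exact lt_add_one C
    _ = ε := by field_simp

theorem mem_almostPeriodicVectors_of_forall_exists_norm_pow_apply_sub_lt [CompleteSpace X]
    (hT : ∀ n : ℕ, ‖T ^ n‖ ≤ C) {x : X}
    (hx : ∀ ε > 0, ∃ m : ℕ, ∃ y ∈ almostPeriodicVectors T, ‖(T ^ m) x - y‖ < ε) :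
    x ∈ almostPeriodicVectors T := by
  refine isCompact_closure_range_of_forall_exists_dist_lt fun ε hε => ?_
  obtain ⟨δ, hδ, hTδ⟩ := exists_pos_forall_norm_pow_apply_lt hT hε
  obtain ⟨m, y, hy, hxy⟩ := hx δ hδ
  refine ⟨m, _, hy.totallyBounded, fun n => ⟨(T ^ n) y, subset_closure ⟨n, rfl⟩, ?_⟩⟩
  rw [pow_add, mul_apply_eq_comp, dist_eq_norm, ← map_sub]
  exact hTδ n _ hxy.le

theorem isClosed_almostPeriodicVectors [CompleteSpace X] (hT : ∀ n : ℕ, ‖T ^ n‖ ≤ C) :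
    IsClosed (almostPeriodicVectors T : Set X) := by
  refine isClosed_of_closure_subset fun x hx =>
    mem_almostPeriodicVectors_of_forall_exists_norm_pow_apply_sub_lt hT fun ε hε => ?_
  obtain ⟨y, hy, hxy⟩ := mem_closure_iff.1 hx ε hε
  exact ⟨0, y, hy, by simpa [dist_eq_norm] using hxy⟩

-- If `Tⁿ⁺ᵐ x` is near `y` with `n < N`, then `Tᵐ⁺ᴺ x` is near `Tᴺ⁻ⁿ y`: since the powers of `T` are
-- equicontinuous, the tail of the orbit stays near the finite set `{Tʲ y | j ≤ N}`.
theorem mem_almostPeriodicVectors_of_forall_exists_pow_apply_mem_closedBall [CompleteSpace X]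
    (hT : ∀ n : ℕ, ‖T ^ n‖ ≤ C) {x : X}
    (hx : ∀ δ > 0, ∃ (y : X) (N : ℕ), ∀ m : ℕ, ∃ n < N, (T ^ (n + m)) x ∈ closedBall y δ) :
    x ∈ almostPeriodicVectors T := by
  refine isCompact_closure_range_of_forall_exists_dist_lt fun ε hε => ?_
  obtain ⟨δ, hδ, hTδ⟩ := exists_pos_forall_norm_pow_apply_lt hT hε
  obtain ⟨y, N, hN⟩ := hx δ hδ
  refine ⟨N, (fun j => (T ^ j) y) '' Iic N, ((finite_Iic N).image _).totallyBounded, fun m => ?_⟩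
  obtain ⟨n, hnN, hn⟩ := hN m
  refine ⟨(T ^ (N - n)) y, ⟨N - n, Nat.sub_le N n, rfl⟩, ?_⟩
  have hsplit : (T ^ (m + N)) x = (T ^ (N - n)) ((T ^ (n + m)) x) := by
    rw [← mul_apply_eq_comp, ← pow_add]
    congr 2
    lia
  rw [hsplit, dist_eq_norm, ← map_sub]
  exact hTδ _ _ (mem_closedBall_iff_norm.1 hn)

end AlmostPeriodicVectors

section WeaklyAlmostPeriodic

variable {𝕜 : Type*} [RCLike 𝕜] {X : Type*} [NormedAddCommGroup X] [NormedSpace 𝕜 X]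
  [CompleteSpace X] {T : X →L[𝕜] X} {C : ℝ}

theorem mem_almostPeriodicVectors_of_isMinimalSet (hT : ∀ n : ℕ, ‖T ^ n‖ ≤ C)
    {M : Set (WeakSpace 𝕜 X)} (hM : IsMinimalSet (WeakSpace.map T) M) (hMc : IsCompact M) {x : X}
    (hx : toWeakSpace 𝕜 X x ∈ M) : x ∈ almostPeriodicVectors T := by
  have hTc := (WeakSpace.map T).continuous
  have hsep : IsSeparable (toWeakSpace 𝕜 X ⁻¹' M) := by
    refine (isSeparable_preimage_toWeakSpace_closure (𝕜 := 𝕜)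
      (countable_range fun n : ℕ => (T ^ n) x).isSeparable).mono (preimage_mono ?_)
    rw [← range_comp]
    simpa only [iterate_weakSpaceMap_toWeakSpace] using! hM.subset_closure_range_iterate hTc hx
  obtain ⟨c, hc, hMcl⟩ := hsep
  have := hc.to_subtype
  refine mem_almostPeriodicVectors_of_forall_exists_pow_apply_mem_closedBall hT fun δ hδ => ?_
  obtain ⟨y, U, hU, hMU, hMUy⟩ := exists_isOpen_inter_subset_of_subset_iUnion hMc ⟨_, hx⟩
    (F := fun y : c => toWeakSpace 𝕜 X '' closedBall y δ)
    (fun y => isClosed_toWeakSpace_image_closedBall y.1 δ) fun w hw => by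
      obtain ⟨y, hy, hwy⟩ := mem_closure_iff.1 (hMcl (a := (toWeakSpace 𝕜 X).symm w) hw) δ hδ
      exact mem_iUnion.2 ⟨⟨y, hy⟩, _, hwy.le, (toWeakSpace 𝕜 X).apply_symm_apply w⟩
  obtain ⟨N, hN⟩ := hM.exists_forall_exists_iterate_mem hTc hMc hU hMU
  refine ⟨y, N, fun m => ?_⟩
  have hmM : toWeakSpace 𝕜 X ((T ^ m) x) ∈ M := by
    rw [← iterate_weakSpaceMap_toWeakSpace]
    exact hM.1.2.2.iterate m hx
  obtain ⟨n, hnN, hn⟩ := hN _ hmM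
  have hnM := hM.1.2.2.iterate n hmM
  rw [iterate_weakSpaceMap_toWeakSpace, ← mul_apply_eq_comp, ← pow_add] at hn hnM
  exact ⟨n, hnN, (toWeakSpace 𝕜 X).injective.mem_set_image.1 (hMUy ⟨hnM, hn⟩)⟩

theorem exists_mem_almostPeriodicVectors_toWeakSpace_mem_closure (hT : ∀ n : ℕ, ‖T ^ n‖ ≤ C) {x : X}
    (hx : IsCompact (closure (toWeakSpace 𝕜 X '' range fun n : ℕ => (T ^ n) x))) :
    ∃ z ∈ almostPeriodicVectors T,
      toWeakSpace 𝕜 X z ∈ closure (toWeakSpace 𝕜 X '' range fun n : ℕ => (T ^ n) x) := by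
  have horbit : toWeakSpace 𝕜 X '' range (fun n : ℕ => (T ^ n) x) =
      range fun n => (WeakSpace.map T)^[n] (toWeakSpace 𝕜 X x) := by
    simp only [← range_comp, comp_def, iterate_weakSpaceMap_toWeakSpace]
  rw [horbit] at hx ⊢
  obtain ⟨M, hMK, hM⟩ := exists_isMinimalSet_subset hx isClosed_closure (range_nonempty _).closure
    (mapsTo_closure_range_iterate (WeakSpace.map T).continuous _)
  obtain ⟨w, hw⟩ := hM.1.1
  obtain ⟨z, rfl⟩ := (toWeakSpace 𝕜 X).surjective w
  exact ⟨z, mem_almostPeriodicVectors_of_isMinimalSet hT hM (hx.of_isClosed_subset hM.1.2.1 hMK) hw,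
    hMK hw⟩

theorem mem_almostPeriodicVectors_of_aeval_mem (hT : ∀ n : ℕ, ‖T ^ n‖ ≤ C) {x : X}
    (hx : IsCompact (closure (toWeakSpace 𝕜 X '' range fun n : ℕ => (T ^ n) x)))
    {p : 𝕜[X]} (hp : p ≠ 0) (hpx : aeval T p x ∈ almostPeriodicVectors T) :
    x ∈ almostPeriodicVectors T := by
  have hclosed := isClosed_almostPeriodicVectors hT
  let π := (almostPeriodicVectors T).mkQL
  let φ : 𝕜[X] →ₗ[𝕜] X ⧸ almostPeriodicVectors T :=
    { toFun q := π (aeval T q x), map_add' := by simp, map_smul' := by simp }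
  have hφ (q : 𝕜[X]) : φ (p * q) = 0 := by
    have := apply_mem_almostPeriodicVectors_of_commute (commute_aeval_self T q) hpx
    simpa [φ, π, mul_comm p q] using this
  have := finiteDimensional_range_of_forall_mul_eq_zero φ hp hφ
  obtain ⟨z, hz, hzx⟩ := exists_mem_almostPeriodicVectors_toWeakSpace_mem_closure hT hx
  have hnorm : π z ∈ closure (π '' range fun n : ℕ => (T ^ n) x) := by
    refine mem_closure_of_toWeakSpace_mem_closure φ.range ?_ (toWeakSpace_apply_mem_closure π hzx)
    rintro _ ⟨_, ⟨n, rfl⟩, rfl⟩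
    exact ⟨Polynomial.X ^ n, by simp [φ]⟩
  have hπz : π z = 0 := (Submodule.Quotient.mk_eq_zero _).2 hz
  refine mem_almostPeriodicVectors_of_forall_exists_norm_pow_apply_sub_lt hT fun ε hε => ?_
  obtain ⟨_, ⟨_, ⟨n, rfl⟩, rfl⟩, hn⟩ := mem_closure_iff.1 hnorm ε hε
  rw [hπz, dist_zero_left] at hn
  obtain ⟨w, hw, hwε⟩ := QuotientAddGroup.norm_lt_iff.1 hn
  refine ⟨n, (T ^ n) x - w, ?_, by simpa using hwε⟩
  exact (Submodule.Quotient.eq _).1 hw.symm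

theorem almostPeriodic_of_weaklyAlmostPeriodic_scalar_plus_compact_power_general
    (p : 𝕜[X]) (hp : p ≠ 0) (hpT : IsCompactOperator (aeval T p))
    (hwap : ∀ x : X, IsCompact (closure
      (toWeakSpace 𝕜 X '' Set.range (fun n : ℕ => (T ^ n) x)))) (x : X) :
    IsCompact (closure (Set.range (fun n : ℕ => (T ^ n) x))) := by
  obtain ⟨C, hC⟩ := exists_forall_norm_pow_le hwap
  exact mem_almostPeriodicVectors_of_aeval_mem hC (hwap x) hp
    (apply_mem_almostPeriodicVectors_of_isCompactOperator hpT (commute_aeval_self T p) hC x)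

end WeaklyAlmostPeriodic

/-- Let `X` be a Banach space over `𝕜` (`ℝ` or `ℂ`) and let `T = α·I + S`
be weakly almost periodic with `S^k` compact for some `k ≥ 1`. Then `T` is almost periodic:
every orbit `{Tⁿ x : n ≥ 0}` is relatively compact in the norm topology. -/
theorem almostPeriodic_of_weaklyAlmostPeriodic_scalar_plus_compact_power
    {𝕜 : Type*} [RCLike 𝕜] {X : Type*} [NormedAddCommGroup X] [NormedSpace 𝕜 X]
    [CompleteSpace X]
    (α : 𝕜) (S : X →L[𝕜] X) (k : ℕ) (hk : 1 ≤ k)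
    (hS : IsCompactOperator (S ^ k : X →L[𝕜] X))
    (T : X →L[𝕜] X) (hT : T = α • (1 : X →L[𝕜] X) + S)
    (hwap : ∀ x : X, IsCompact (closure
      (toWeakSpace 𝕜 X '' Set.range (fun n : ℕ => (T ^ n) x)))) :
    ∀ x : X, IsCompact (closure (Set.range (fun n : ℕ => (T ^ n) x))) :=
  almostPeriodic_of_weaklyAlmostPeriodic_scalar_plus_compact_power_general
    ((Polynomial.X - Polynomial.C α) ^ k) (pow_ne_zero k (X_sub_C_ne_zero α))
    (by simpa [hT, Algebra.algebraMap_eq_smul_one] using hS) hwap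
end

section
/- Let H be a Hilbert space over 𝕜 (𝕜 = ℝ or ℂ), and let T be a power-bounded operator on H of the form T = α·I + S with α ∈ 𝕜 and S^k compact for some k ≥ 1. If inf_{n ≥ 0} ‖Tⁿ x‖ > 0 for every x ≠ 0, then T is similar to a unitary operator: there exist an invertible bounded operator R on H and a unitary operator U on H such that T = R⁻¹ ∘ U ∘ R. -/
/-!
Call `M` the closed subspace of vectors with relatively compact forward orbit. If `T x - α • x ∈ M`
then `T ^ n x - α ^ n • x ∈ M` for all `n`. For `‖α‖ < 1` this puts the orbit of `x` near `M`
eventually, so `x ∈ M`; for `‖α‖ ≥ 1` the mean ergodic theorem for `α⁻¹ • T` yields an eigenvector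
`z` with `z - x ∈ M`, and eigenvectors lie in `M`. Hence, if `p(T)` is compact for a split
polynomial `p ≠ 0`, removing the linear factors of `p` one by one from `p(T) x ∈ M` shows that every
`x` is in `M`.

Let `w` be the limit of a relatively compact orbit `T ^ n x` along an idempotent ultrafilter.
Idempotence gives `T ^ n w → w` along the same ultrafilter, so `T ^ n (w - x) → 0` and the lower
bound on orbits forces `w = x`: every vector is recurrent. By recurrence the powers of `T` are
uniformly bounded below and the range of `T` is dense, hence everything.

By Sz.-Nagy's argument, a Banach limit of the forms `⟪T ^ n x, T ^ n y⟫` is then a `T`-invariant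
inner product equivalent to the original one, and the square root of its Gram operator conjugates
`T` to a unitary.
-/

open Filter Topology
open scoped InnerProductSpace Pointwise Polynomial

section BanachLimit

variable {E F : Type*} [NormedAddCommGroup E] [NormedSpace ℝ E]
  [NormedAddCommGroup F] [NormedSpace ℝ F]

theorem birkhoffAverage_mem_of_convex {X : Type*} {s : Set E} (hs : Convex ℝ s) {φ : X → X}
    {g : X → E} {x : X} (hg : ∀ k, g (φ^[k] x) ∈ s) {n : ℕ} (hn : n ≠ 0) :
    birkhoffAverage ℝ φ g n x ∈ s := by
  rw [birkhoffAverage, birkhoffSum, Finset.smul_sum]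
  refine hs.sum_mem (fun _ _ => by positivity) ?_ fun k _ => hg k
  simp [hn]

/-- A Banach limit, extended to vector-valued sequences: the limit of the Cesàro means along a
fixed free ultrafilter. The Cesàro means are encoded as Birkhoff averages of the successor map;
the value is junk unless these means converge along the ultrafilter, which they do when `f` is
bounded and `E` is proper. It serves to average orbits in a shift-invariant way. -/
noncomputable def banachLimit (f : ℕ → E) : E :=
  limUnder (hyperfilter ℕ : Filter ℕ) fun n => birkhoffAverage ℝ Nat.succ f n 0

variable [ProperSpace E] {f g : ℕ → E}

theorem tendsto_banachLimit (hf : Bornology.IsBounded (Set.range f)) :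
    Tendsto (fun n => birkhoffAverage ℝ Nat.succ f n 0) (hyperfilter ℕ : Filter ℕ)
      (𝓝 (banachLimit f)) := by
  obtain ⟨C, hC⟩ := hf.subset_closedBall 0
  have hmem : ∀ᶠ n in (hyperfilter ℕ : Filter ℕ),
      birkhoffAverage ℝ Nat.succ f n 0 ∈ Metric.closedBall 0 C :=
    Nat.hyperfilter_le_atTop <| (eventually_ne_atTop 0).mono fun n hn =>
      birkhoffAverage_mem_of_convex (convex_closedBall 0 C) (fun _ => hC (Set.mem_range_self _)) hn
  obtain ⟨l, -, hl⟩ := (isCompact_closedBall (0 : E) C).ultrafilter_le_nhds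
    ((hyperfilter ℕ).map fun n => birkhoffAverage ℝ Nat.succ f n 0) (tendsto_principal.2 hmem)
  exact tendsto_nhds_limUnder ⟨l, hl⟩

theorem banachLimit_mem_of_convex {s : Set E} (hs : Convex ℝ s) (hsc : IsClosed s)
    (hfb : Bornology.IsBounded (Set.range f)) (hf : ∀ n, f n ∈ s) : banachLimit f ∈ s :=
  hsc.mem_of_tendsto (tendsto_banachLimit hfb) <|
    Nat.hyperfilter_le_atTop <| (eventually_ne_atTop 0).mono fun _ hn =>
      birkhoffAverage_mem_of_convex hs (fun _ => hf _) hn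

theorem banachLimit_add (hf : Bornology.IsBounded (Set.range f))
    (hg : Bornology.IsBounded (Set.range g)) :
    banachLimit (f + g) = banachLimit f + banachLimit g :=
  (((tendsto_banachLimit hf).add (tendsto_banachLimit hg)).congr fun n => by
    rw [birkhoffAverage_add]; rfl).limUnder_eq

theorem map_banachLimit (L : E →L[ℝ] F) (hf : Bornology.IsBounded (Set.range f)) :
    banachLimit (L ∘ f) = L (banachLimit f) :=
  (((L.continuous.tendsto _).comp (tendsto_banachLimit hf)).congr fun n =>
    map_birkhoffAverage ℝ ℝ L Nat.succ f n 0).limUnder_eq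

theorem banachLimit_comp_succ (hf : Bornology.IsBounded (Set.range f)) :
    banachLimit (f ∘ Nat.succ) = banachLimit f := by
  have hshift := (tendsto_birkhoffAverage_apply_sub_birkhoffAverage' ℝ hf Nat.succ 0).mono_left
    Nat.hyperfilter_le_atTop
  refine Tendsto.limUnder_eq ?_
  simpa [birkhoffAverage, birkhoffSum, Nat.succ_iterate, Function.comp_def, Nat.add_comm 1] using
    hshift.add (tendsto_banachLimit hf)

end BanachLimit

section WeakMean

variable {𝕜 H : Type*} [RCLike 𝕜] [NormedAddCommGroup H] [InnerProductSpace 𝕜 H]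

theorem isBounded_range_inner_apply {G : ℕ → H →L[𝕜] H} {C : ℝ} (hG : ∀ n, ‖G n‖ ≤ C)
    (x y : H) : Bornology.IsBounded (Set.range fun n => ⟪G n x, y⟫_𝕜) := by
  refine isBounded_iff_forall_norm_le.2 ⟨C * ‖x‖ * ‖y‖, ?_⟩
  rintro _ ⟨n, rfl⟩
  grw [norm_inner_le_norm, (G n).le_of_opNorm_le (hG n) x]

variable [CompleteSpace H]

theorem exists_inner_eq_banachLimit {G : ℕ → H →L[𝕜] H} {C : ℝ} (hG : ∀ n, ‖G n‖ ≤ C) :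
    ∃ B : H →L[𝕜] H, ∀ x y, ⟪B x, y⟫_𝕜 = banachLimit fun n => ⟪G n x, y⟫_𝕜 := by
  have hb := isBounded_range_inner_apply hG
  have hmul (c : 𝕜) (x y : H) : (banachLimit fun n => c * ⟪G n x, y⟫_𝕜) =
      c * banachLimit fun n => ⟪G n x, y⟫_𝕜 :=
    map_banachLimit (ContinuousLinearMap.mul ℝ 𝕜 c) (hb x y)
  let form : H →ₗ⋆[𝕜] H →ₗ[𝕜] 𝕜 := LinearMap.mk₂'ₛₗ (starRingEnd 𝕜) (RingHom.id 𝕜)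
    (fun x y => banachLimit fun n => ⟪G n x, y⟫_𝕜)
    (fun x x' y => by
      simpa only [map_add, inner_add_left] using! banachLimit_add (hb x y) (hb x' y))
    (fun c x y => by simpa only [map_smul, inner_smul_left] using! hmul (starRingEnd 𝕜 c) x y)
    (fun x y y' => by simpa only [inner_add_right] using! banachLimit_add (hb x y) (hb x y'))
    (fun c x y => by simpa only [inner_smul_right] using! hmul c x y)
  let boundedForm : H →L⋆[𝕜] H →L[𝕜] 𝕜 := form.mkContinuous₂ C fun x y =>
    mem_closedBall_zero_iff.1 <| banachLimit_mem_of_convex (convex_closedBall 0 _)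
      Metric.isClosed_closedBall (hb x y) fun n => mem_closedBall_zero_iff.2 <| by
        grw [norm_inner_le_norm, (G n).le_of_opNorm_le (hG n) x]
  exact ⟨InnerProductSpace.continuousLinearMapOfBilin boundedForm, fun x y =>
    InnerProductSpace.continuousLinearMapOfBilin_apply boundedForm x y⟩

-- `B` is a weak limit of Cesàro means of the operators `P ^ n * Q ^ n`.
theorem exists_mul_mul_eq_self_and_inner_mem {P Q : H →L[𝕜] H} {C : ℝ}
    (hPQ : ∀ n, ‖P ^ n * Q ^ n‖ ≤ C) :
    ∃ B : H →L[𝕜] H, P * B * Q = B ∧ ∀ (x y : H) (s : Set 𝕜), Convex ℝ s → IsClosed s →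
      (∀ n, ⟪(P ^ n * Q ^ n) x, y⟫_𝕜 ∈ s) → ⟪B x, y⟫_𝕜 ∈ s := by
  obtain ⟨B, hB⟩ := exists_inner_eq_banachLimit hPQ
  have hb := isBounded_range_inner_apply hPQ
  refine ⟨B, ContinuousLinearMap.ext fun x => ext_inner_right 𝕜 fun y => ?_, fun x y s hs hsc h =>
    (hB x y).symm ▸ banachLimit_mem_of_convex hs hsc (hb x y) h⟩
  calc ⟪(P * B * Q) x, y⟫_𝕜
      = ⟪B (Q x), ContinuousLinearMap.adjoint P y⟫_𝕜 := by
        rw [ContinuousLinearMap.adjoint_inner_right]; rfl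
    _ = banachLimit ((fun n => ⟪(P ^ n * Q ^ n) x, y⟫_𝕜) ∘ Nat.succ) := by
        simp only [hB, ContinuousLinearMap.adjoint_inner_right, Function.comp_def,
          Nat.succ_eq_add_one, pow_succ' P, pow_succ Q]
        rfl
    _ = ⟪B x, y⟫_𝕜 := by rw [banachLimit_comp_succ (hb x y), hB]

end WeakMean

section SquareRoot

theorem norm_mul_self_sub_mul_self_le {𝔸 : Type*} [NonUnitalSeminormedRing 𝔸] {y z : 𝔸} {r : ℝ}
    (hy : ‖y‖ ≤ r) (hz : ‖z‖ ≤ r) : ‖y * y - z * z‖ ≤ 2 * r * ‖y - z‖ :=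
  calc
    ‖y * y - z * z‖ = ‖y * (y - z) + (y - z) * z‖ := by
      rw [mul_sub, sub_mul, sub_add_sub_cancel]
    _ ≤ ‖y‖ * ‖y - z‖ + ‖y - z‖ * ‖z‖ := norm_add_le_of_le (norm_mul_le _ _) (norm_mul_le _ _)
    _ ≤ 2 * r * ‖y - z‖ := by grw [hy, hz]; linarith

section BanachAlgebra

variable (𝕜 : Type*) {𝔸 : Type*} [RCLike 𝕜] [NormedRing 𝔸] [NormedAlgebra 𝕜 𝔸] [CompleteSpace 𝔸]

-- The fixed-point form of `(1 - y) * (1 - y) = 1 - b`.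
theorem existsUnique_eq_half_smul_add_mul_self {b : 𝔸} (hb : ‖b‖ < 1) :
    ∃! y : 𝔸, ‖y‖ ≤ ‖b‖ ∧ (2 : 𝕜)⁻¹ • (b + y * y) = y := by
  have hhalf : ‖(2 : 𝕜)⁻¹‖ = 2⁻¹ := by simp
  have hlip {y z : 𝔸} (hy : ‖y‖ ≤ ‖b‖) (hz : ‖z‖ ≤ ‖b‖) :
      ‖(2 : 𝕜)⁻¹ • (b + y * y) - (2 : 𝕜)⁻¹ • (b + z * z)‖ ≤ ‖b‖ * ‖y - z‖ := by
    rw [← smul_sub, add_sub_add_left_eq_sub, norm_smul, hhalf]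
    grw [norm_mul_self_sub_mul_self_le hy hz]
    linarith
  have hmaps : Set.MapsTo (fun y : 𝔸 => (2 : 𝕜)⁻¹ • (b + y * y)) (Metric.closedBall 0 ‖b‖)
      (Metric.closedBall 0 ‖b‖) := fun y hy => by
    rw [mem_closedBall_zero_iff] at hy ⊢
    grw [norm_smul, hhalf, norm_add_le, norm_mul_le, hy]
    nlinarith [norm_nonneg b]
  have hcontr : ContractingWith ‖b‖₊ hmaps.restrict :=
    ⟨hb, LipschitzWith.of_dist_le_mul fun y z => by
      simpa only [Subtype.dist_eq, dist_eq_norm] using!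
        hlip (mem_closedBall_zero_iff.1 y.2) (mem_closedBall_zero_iff.1 z.2)⟩
  obtain ⟨y, hy, hfix, -⟩ := hcontr.exists_fixedPoint' Metric.isClosed_closedBall.isComplete hmaps
    (Metric.mem_closedBall_self (norm_nonneg b)) (edist_ne_top _ _)
  refine ⟨y, ⟨mem_closedBall_zero_iff.1 hy, hfix⟩, fun z ⟨hz, hzfix⟩ => ?_⟩
  have hle : ‖z - y‖ ≤ ‖b‖ * ‖z - y‖ := by
    simpa only [hzfix, hfix.eq] using hlip hz (mem_closedBall_zero_iff.1 hy)
  rw [← sub_eq_zero, ← norm_le_zero_iff]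
  nlinarith [norm_nonneg (z - y)]

theorem exists_isSelfAdjoint_one_sub_mul_self [StarRing 𝔸] [NormedStarGroup 𝔸] [StarModule 𝕜 𝔸]
    {b : 𝔸} (hb : IsSelfAdjoint b) (hb1 : ‖b‖ < 1) :
    ∃ y : 𝔸, IsSelfAdjoint y ∧ ‖y‖ < 1 ∧ (1 - y) * (1 - y) = 1 - b := by
  obtain ⟨y, ⟨hyb, hy⟩, huniq⟩ := existsUnique_eq_half_smul_add_mul_self 𝕜 hb1
  refine ⟨y, huniq (star y) ⟨by rwa [norm_star], ?_⟩, hyb.trans_lt hb1, ?_⟩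
  · simpa [hb.star_eq] using congr(star $hy)
  · have htwo : b + y * y = y + y := by rw [← two_smul 𝕜 y, ← inv_smul_eq_iff₀ two_ne_zero, hy]
    rw [eq_sub_of_add_eq htwo]
    noncomm_ring

end BanachAlgebra

variable {𝕜 H : Type*} [RCLike 𝕜] [NormedAddCommGroup H] [InnerProductSpace 𝕜 H]

theorem exists_norm_one_sub_smul_lt_one_of_coercive (A : H →L[𝕜] H) {δ : ℝ} (hδ : 0 < δ)
    (hA : ∀ x, δ * ‖x‖ ^ 2 ≤ RCLike.re ⟪A x, x⟫_𝕜) : ∃ t : ℝ, 0 < t ∧ ‖1 - (t : 𝕜) • A‖ < 1 := by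
  -- Up to a `δ ^ 2` that avoids dividing by `0`, this minimizes `1 - 2 * t * δ + t ^ 2 * ‖A‖ ^ 2`.
  set t : ℝ := δ / (‖A‖ ^ 2 + δ ^ 2) with ht
  have htpos : 0 < t := by positivity
  have hteq : t * ‖A‖ ^ 2 + t * δ ^ 2 = δ := by rw [ht]; field_simp
  have htδ : 0 ≤ 1 - t * δ := by nlinarith [sq_nonneg ‖A‖]
  have hsq (x : H) : ‖(1 - (t : 𝕜) • A) x‖ ^ 2 ≤ (1 - t * δ) * ‖x‖ ^ 2 :=
    calc ‖(1 - (t : 𝕜) • A) x‖ ^ 2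
        = ‖x‖ ^ 2 - 2 * (t * RCLike.re ⟪A x, x⟫_𝕜) + t ^ 2 * ‖A x‖ ^ 2 := by
          rw [sub_apply, norm_sub_sq (𝕜 := 𝕜), ← inner_re_symm]
          simp [inner_smul_left, norm_smul, mul_pow]
      _ ≤ ‖x‖ ^ 2 - 2 * (t * (δ * ‖x‖ ^ 2)) + t ^ 2 * (‖A‖ * ‖x‖) ^ 2 := by
          grw [hA x, A.le_opNorm x]
      _ ≤ (1 - t * δ) * ‖x‖ ^ 2 := by
          have : t * (t * ‖A‖ ^ 2) ≤ t * δ := by gcongr; nlinarith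
          nlinarith [mul_le_mul_of_nonneg_right this (sq_nonneg ‖x‖)]
  refine ⟨t, htpos, lt_of_le_of_lt ?_ (?_ : √(1 - t * δ) < 1)⟩
  · refine ContinuousLinearMap.opNorm_le_bound _ (Real.sqrt_nonneg _) fun x => ?_
    refine le_of_sq_le_sq ?_ (by positivity)
    rw [mul_pow, Real.sq_sqrt htδ]
    exact hsq x
  · rw [Real.sqrt_lt' one_pos]
    nlinarith

theorem exists_isUnit_isSelfAdjoint_mul_self_eq_of_coercive [CompleteSpace H] {A : H →L[𝕜] H}
    (hA : IsSelfAdjoint A) {δ : ℝ} (hδ : 0 < δ)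
    (hcoer : ∀ x, δ * ‖x‖ ^ 2 ≤ RCLike.re ⟪A x, x⟫_𝕜) :
    ∃ R : H →L[𝕜] H, IsUnit R ∧ IsSelfAdjoint R ∧ R * R = A := by
  obtain ⟨t, ht, hlt⟩ := exists_norm_one_sub_smul_lt_one_of_coercive A hδ hcoer
  have hreal (s : ℝ) : IsSelfAdjoint (s : 𝕜) := RCLike.conj_ofReal s
  obtain ⟨Y, hY, hY1, hsq⟩ := exists_isSelfAdjoint_one_sub_mul_self 𝕜
    ((IsSelfAdjoint.one _).sub ((hreal t).smul hA)) hlt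
  have hc : ((√t)⁻¹ : ℝ) * ((√t)⁻¹ : ℝ) * (t : 𝕜) = 1 := by
    norm_cast
    rw [← mul_inv, Real.mul_self_sqrt ht.le, inv_mul_cancel₀ ht.ne']
  refine ⟨(((√t)⁻¹ : ℝ) : 𝕜) • (1 - Y), ?_, (hreal _).smul ((IsSelfAdjoint.one _).sub hY), ?_⟩
  · exact (isUnit_one_sub_of_norm_lt_one hY1).smul
      (Units.mk0 (((√t)⁻¹ : ℝ) : 𝕜) (left_ne_zero_of_mul (left_ne_zero_of_mul_eq_one hc)))
  · rw [smul_mul_smul_comm, hsq, sub_sub_cancel, smul_smul, hc, one_smul]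

end SquareRoot

section PowerBounded

variable {𝕜 E : Type*} [NontriviallyNormedField 𝕜] [SeminormedAddCommGroup E] [NormedSpace 𝕜 E]
  {T : E →L[𝕜] E}

/-- An operator whose powers are uniformly bounded in norm. -/
def IsPowerBounded (T : E →L[𝕜] E) : Prop :=
  ∃ C : ℝ, ∀ n : ℕ, ‖T ^ n‖ ≤ C

theorem IsPowerBounded.exists_pos (hT : IsPowerBounded T) :
    ∃ C > 0, ∀ (n : ℕ) (x : E), ‖(T ^ n) x‖ ≤ C * ‖x‖ := by
  obtain ⟨C, hC⟩ := hT
  exact ⟨max C 1, by positivity, fun n x =>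
    (T ^ n).le_of_opNorm_le ((hC n).trans (le_max_left _ _)) x⟩

theorem IsPowerBounded.smul (hT : IsPowerBounded T) {c : 𝕜} (hc : ‖c‖ ≤ 1) :
    IsPowerBounded (c • T) := by
  obtain ⟨C, hC⟩ := hT
  refine ⟨C, fun n => ?_⟩
  rw [smul_pow, norm_smul, norm_pow]
  exact (mul_le_of_le_one_left (norm_nonneg _) (pow_le_one₀ (norm_nonneg c) hc)).trans (hC n)

end PowerBounded

section SzNagy

variable {𝕜 H : Type*} [RCLike 𝕜] [NormedAddCommGroup H] [InnerProductSpace 𝕜 H] [CompleteSpace H]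
  {T : H →L[𝕜] H} {δ : ℝ}

theorem exists_isSelfAdjoint_star_mul_mul_eq (hT : IsPowerBounded T) (hδ : 0 ≤ δ)
    (hlow : ∀ n x, δ * ‖x‖ ≤ ‖(T ^ n) x‖) :
    ∃ A : H →L[𝕜] H, IsSelfAdjoint A ∧ star T * A * T = A ∧
      ∀ x, δ ^ 2 * ‖x‖ ^ 2 ≤ RCLike.re ⟪A x, x⟫_𝕜 := by
  obtain ⟨C, hC⟩ := hT
  have hbound (n : ℕ) : ‖star T ^ n * T ^ n‖ ≤ C * C := by
    rw [← star_pow, CStarRing.norm_star_mul_self]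
    exact mul_le_mul (hC n) (hC n) (norm_nonneg _) ((norm_nonneg _).trans (hC n))
  obtain ⟨B, hB, hmem⟩ := exists_mul_mul_eq_self_and_inner_mem hbound
  have hcoer (x : H) : δ ^ 2 * ‖x‖ ^ 2 ≤ RCLike.re ⟪B x, x⟫_𝕜 := by
    refine hmem x x {c | δ ^ 2 * ‖x‖ ^ 2 ≤ RCLike.re c}
      (convex_halfSpace_ge RCLike.reLm.isLinear _)
      (isClosed_le continuous_const RCLike.continuous_re) fun n => ?_
    change _ ≤ RCLike.re _
    rw [← star_pow, ← mul_pow]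
    exact (pow_le_pow_left₀ (by positivity) (hlow n x) 2).trans_eq
      ((T ^ n).apply_norm_sq_eq_inner_adjoint_left x)
  have hBstar : star T * star B * T = star B := by
    simpa [mul_assoc] using congr(star $hB)
  refine ⟨(2 : 𝕜)⁻¹ • (B + star B), .smul ?_ (.add_star_self B), ?_, fun x => ?_⟩
  · simp [IsSelfAdjoint]
  · rw [mul_smul_comm, smul_mul_assoc, mul_add, add_mul, hB, hBstar]
  · have hstar : RCLike.re ⟪star B x, x⟫_𝕜 = RCLike.re ⟪B x, x⟫_𝕜 := by
      rw [ContinuousLinearMap.star_eq_adjoint, ContinuousLinearMap.adjoint_inner_left,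
        inner_re_symm]
    have htwo : (2 : 𝕜)⁻¹ = ((2⁻¹ : ℝ) : 𝕜) := by push_cast; rfl
    rw [smul_apply, add_apply, inner_smul_left, htwo, RCLike.conj_ofReal, RCLike.re_ofReal_mul,
      inner_add_left, map_add, hstar]
    linarith [hcoer x]

theorem exists_similar_linearIsometry (hT : IsPowerBounded T) (hδ : 0 < δ)
    (hlow : ∀ n x, δ * ‖x‖ ≤ ‖(T ^ n) x‖) :
    ∃ (R : H ≃L[𝕜] H) (V : H →ₗᵢ[𝕜] H), ∀ x, T x = R.symm (V (R x)) := by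
  obtain ⟨A, hA, hTAT, hcoer⟩ := exists_isSelfAdjoint_star_mul_mul_eq hT hδ.le hlow
  obtain ⟨_, ⟨u, rfl⟩, hRsa, hRR⟩ :=
    exists_isUnit_isSelfAdjoint_mul_self_eq_of_coercive hA (pow_pos hδ 2) hcoer
  let R := ContinuousLinearEquiv.unitsEquiv 𝕜 H u
  have hnorm (y : H) : ‖R y‖ ^ 2 = RCLike.re ⟪A y, y⟫_𝕜 := by
    have hstar : star (u : H →L[𝕜] H) * u = A := by rw [hRsa.star_eq, hRR]
    rw [← hstar]
    exact (u : H →L[𝕜] H).apply_norm_sq_eq_inner_adjoint_left y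
  have hinv (y : H) : ‖R (T y)‖ = ‖R y‖ := by
    rw [← sq_eq_sq₀ (norm_nonneg _) (norm_nonneg _)]
    calc ‖R (T y)‖ ^ 2 = RCLike.re ⟪A (T y), T y⟫_𝕜 := hnorm (T y)
      _ = RCLike.re ⟪(star T * A * T) y, y⟫_𝕜 :=
        congrArg RCLike.re (T.adjoint_inner_left y (A (T y))).symm
      _ = ‖R y‖ ^ 2 := by rw [hTAT, hnorm]
  refine ⟨R, ⟨R.toLinearMap ∘ₗ T.toLinearMap ∘ₗ R.symm.toLinearMap, fun x => ?_⟩, fun x => ?_⟩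
  · simpa using hinv (R.symm x)
  · simp

end SzNagy

section PrecompactOrbits

variable {𝕜 E : Type*} [NontriviallyNormedField 𝕜] [NormedAddCommGroup E] [NormedSpace 𝕜 E]
  {T : E →L[𝕜] E}

/-- The vectors whose forward orbit under `T` is relatively compact, i.e. lies in a compact set:
those to which recurrence arguments apply. -/
def precompactOrbits (T : E →L[𝕜] E) : Submodule 𝕜 E where
  carrier := {x | ∃ K : Set E, IsCompact K ∧ ∀ n : ℕ, (T ^ n) x ∈ K}
  zero_mem' := ⟨{0}, isCompact_singleton, fun n => map_zero (T ^ n)⟩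
  add_mem' := fun ⟨K, hK, hxK⟩ ⟨L, hL, hyL⟩ =>
    ⟨K + L, hK.add hL, fun n => map_add (T ^ n) _ _ ▸ Set.add_mem_add (hxK n) (hyL n)⟩
  smul_mem' := fun c _ ⟨K, hK, hxK⟩ =>
    ⟨c • K, hK.smul c, fun n => map_smul (T ^ n) c _ ▸ Set.smul_mem_smul_set (hxK n)⟩

namespace precompactOrbits

theorem apply_mem {x : E} (hx : x ∈ precompactOrbits T) : T x ∈ precompactOrbits T := by
  obtain ⟨K, hK, hxK⟩ := hx
  exact ⟨K, hK, fun n => hxK (n + 1)⟩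

theorem pow_sub_pow_smul_mem {α : 𝕜} {x : E} (hx : T x - α • x ∈ precompactOrbits T) (n : ℕ) :
    (T ^ n) x - α ^ n • x ∈ precompactOrbits T := by
  induction n with
  | zero => simp
  | succ n ih =>
    have hsplit : (T ^ (n + 1)) x - α ^ (n + 1) • x =
        T ((T ^ n) x - α ^ n • x) + α ^ n • (T x - α • x) := by
      rw [pow_succ', mul_apply_eq_comp, map_sub, map_smul, smul_sub, smul_smul, ← pow_succ]
      abel
    exact hsplit ▸ add_mem (apply_mem ih) (Submodule.smul_mem _ _ hx)

theorem mem_of_forall_exists_norm_pow_sub_lt [CompleteSpace E] (hT : IsPowerBounded T) {x : E}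
    (h : ∀ ε > 0, ∃ N : ℕ, ∃ y ∈ precompactOrbits T, ‖(T ^ N) x - y‖ < ε) :
    x ∈ precompactOrbits T := by
  obtain ⟨C, hC0, hC⟩ := hT.exists_pos
  suffices TotallyBounded (Set.range fun n : ℕ => (T ^ n) x) from
    ⟨_, this.closure.isCompact_of_isClosed isClosed_closure, fun n =>
      subset_closure (Set.mem_range_self n)⟩
  rw [Metric.totallyBounded_iff]
  intro ε hε
  obtain ⟨N, y, ⟨K, hK, hyK⟩, hNy⟩ := h (ε / 2 / C) (by positivity)
  obtain ⟨t, ht, hKt⟩ := Metric.totallyBounded_iff.1 hK.totallyBounded (ε / 2) (by positivity)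
  refine ⟨t ∪ (fun n : ℕ => (T ^ n) x) '' Set.Iio N, ht.union ((Set.finite_Iio N).image _), ?_⟩
  rintro _ ⟨n, rfl⟩
  rw [Set.mem_iUnion₂]
  rcases lt_or_ge n N with hn | hn
  · exact ⟨_, .inr ⟨n, hn, rfl⟩, Metric.mem_ball_self hε⟩
  · obtain ⟨m, rfl⟩ := Nat.exists_eq_add_of_le' hn
    obtain ⟨z, hz, hyz⟩ := Set.mem_iUnion₂.1 (hKt (hyK m))
    have hclose : dist ((T ^ (m + N)) x) ((T ^ m) y) < ε / 2 :=
      calc dist ((T ^ (m + N)) x) ((T ^ m) y) = ‖(T ^ m) ((T ^ N) x - y)‖ := by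
            rw [dist_eq_norm, pow_add, map_sub]; rfl
        _ ≤ C * ‖(T ^ N) x - y‖ := hC m _
        _ < C * (ε / 2 / C) := by gcongr
        _ = ε / 2 := mul_div_cancel₀ _ hC0.ne'
    exact ⟨z, .inl hz, (dist_triangle _ _ _).trans_lt (by linarith [Metric.mem_ball.1 hyz])⟩

theorem isClosed [CompleteSpace E] (hT : IsPowerBounded T) :
    IsClosed (precompactOrbits T : Set E) :=
  isClosed_of_closure_subset fun x hx => mem_of_forall_exists_norm_pow_sub_lt hT fun ε hε => by
    exact ⟨0, by simpa [dist_eq_norm] using Metric.mem_closure_iff.1 hx ε hε⟩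

theorem mem_of_apply_eq_smul [ProperSpace 𝕜] (hT : IsPowerBounded T) {α : 𝕜} {z : E}
    (hz : T z = α • z) : z ∈ precompactOrbits T := by
  obtain ⟨C, -, hC⟩ := hT.exists_pos
  rcases eq_or_ne z 0 with rfl | hz0
  · exact zero_mem _
  have hpow (n : ℕ) : (T ^ n) z = α ^ n • z := by
    induction n with
    | zero => simp
    | succ n ih => rw [pow_succ', mul_apply_eq_comp, ih, map_smul, hz, smul_smul, pow_succ]
  have hbound (n : ℕ) : ‖α ^ n‖ ≤ C :=
    le_of_mul_le_mul_right ((norm_smul _ z).symm.trans_le (hpow n ▸ hC n z)) (norm_pos_iff.2 hz0)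
  exact ⟨(· • z) '' Metric.closedBall (0 : 𝕜) C,
    (isCompact_closedBall 0 C).image (by fun_prop), fun n =>
      ⟨α ^ n, mem_closedBall_zero_iff.2 (hbound n), (hpow n).symm⟩⟩

theorem mem_of_isCompactOperator (hT : IsPowerBounded T) {K : E →L[𝕜] E} (hK : IsCompactOperator K)
    (hKT : Commute K T) (x : E) : K x ∈ precompactOrbits T := by
  obtain ⟨C, -, hC⟩ := hT.exists_pos
  obtain ⟨L, hL, hKL⟩ := hK.image_closedBall_subset_compact (C * ‖x‖)
  refine ⟨L, hL, fun n => hKL ⟨(T ^ n) x, mem_closedBall_zero_iff.2 (hC n x), ?_⟩⟩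
  exact congr($((hKT.pow_right n).eq) x)

end precompactOrbits

end PrecompactOrbits

section Ergodic

variable {𝕜 H : Type*} [RCLike 𝕜] [NormedAddCommGroup H] [InnerProductSpace 𝕜 H] [CompleteSpace H]
  {T : H →L[𝕜] H}

theorem exists_apply_eq_self_and_sub_mem (hT : IsPowerBounded T) {K : Submodule 𝕜 H}
    (hK : IsClosed (K : Set H)) {x : H} (hx : ∀ n : ℕ, (T ^ n) x - x ∈ K) :
    ∃ z, T z = z ∧ z - x ∈ K := by
  obtain ⟨C, hC⟩ := hT
  obtain ⟨B, hTB, hB⟩ :=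
    exists_mul_mul_eq_self_and_inner_mem (P := T) (Q := 1) (by simpa only [one_pow, mul_one])
  have : CompleteSpace K := hK.completeSpace_coe
  refine ⟨B x, congr($hTB x), ?_⟩
  rw [← K.orthogonal_orthogonal, Submodule.mem_orthogonal']
  intro y hy
  have hmean : ⟪B x, y⟫_𝕜 ∈ ({⟪x, y⟫_𝕜} : Set 𝕜) :=
    hB x y _ (convex_singleton _) isClosed_singleton fun n => by
      rw [one_pow, mul_one, Set.mem_singleton_iff, ← sub_eq_zero, ← inner_sub_left]
      exact hy _ (hx n)
  rw [inner_sub_left, Set.mem_singleton_iff.1 hmean, sub_self]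

namespace precompactOrbits

theorem mem_of_apply_sub_smul_mem (hT : IsPowerBounded T) {α : 𝕜} {x : H}
    (hx : T x - α • x ∈ precompactOrbits T) : x ∈ precompactOrbits T := by
  have hpow := pow_sub_pow_smul_mem hx
  rcases lt_or_ge ‖α‖ 1 with hα | hα
  · refine mem_of_forall_exists_norm_pow_sub_lt hT fun ε hε => ?_
    have hlim : Tendsto (fun n : ℕ => α ^ n • x) atTop (𝓝 0) := by
      simpa using (tendsto_pow_atTop_nhds_zero_of_norm_lt_one hα).smul_const x
    obtain ⟨N, hN⟩ := (hlim.norm.eventually_lt_const (norm_zero.trans_lt hε)).exists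
    exact ⟨N, _, hpow N, by rwa [sub_sub_cancel]⟩
  · have hα0 : α ≠ 0 := norm_pos_iff.1 (one_pos.trans_le hα)
    have hmean (n : ℕ) : ((α⁻¹ • T) ^ n) x - x ∈ precompactOrbits T := by
      convert Submodule.smul_mem _ (α⁻¹ ^ n) (hpow n) using 1
      rw [smul_pow, smul_apply, smul_sub, smul_smul, ← mul_pow, inv_mul_cancel₀ hα0, one_pow,
        one_smul]
    obtain ⟨z, hz, hzx⟩ := exists_apply_eq_self_and_sub_mem
      (hT.smul (norm_inv α ▸ inv_le_one_of_one_le₀ hα)) (isClosed hT) hmean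
    have hzα : T z = α • z := (inv_smul_eq_iff₀ hα0).1 hz
    simpa using sub_mem (mem_of_apply_eq_smul hT hzα) hzx

theorem mem_of_aeval_mem (hT : IsPowerBounded T) {p : 𝕜[X]} (hp : p.Splits) (hp0 : p ≠ 0) {x : H}
    (hx : (p.aeval T) x ∈ precompactOrbits T) : x ∈ precompactOrbits T := by
  induction hp using Submonoid.closure_induction generalizing x with
  | one => simpa using hx
  | mem q hq =>
    rcases hq with ⟨a, rfl⟩ | ⟨a, rfl⟩
    · have ha : a ≠ 0 := by simpa using hp0
      rw [Polynomial.aeval_C, Algebra.algebraMap_eq_smul_one] at hx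
      exact ((precompactOrbits T).smul_mem_iff ha).1 hx
    · refine mem_of_apply_sub_smul_mem hT (α := -a) ?_
      simpa [Algebra.algebraMap_eq_smul_one] using hx
  | mul q r _ _ hq hr =>
    rw [map_mul] at hx
    exact hr (right_ne_zero_of_mul hp0) (hq (left_ne_zero_of_mul hp0) hx)

theorem eq_top_of_isCompactOperator_aeval (hT : IsPowerBounded T) {p : 𝕜[X]} (hp : p.Splits)
    (hp0 : p ≠ 0) (hK : IsCompactOperator (p.aeval T)) : precompactOrbits T = ⊤ :=
  have hcomm : Commute (p.aeval T) T := by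
    simpa using (Commute.all p Polynomial.X).map (Polynomial.aeval T)
  Submodule.eq_top_iff'.2 fun x =>
    mem_of_aeval_mem hT hp hp0 (mem_of_isCompactOperator hT hK hcomm x)

end precompactOrbits

end Ergodic

section Recurrence

theorem exists_ultrafilter_le_atTop_eventually_add : ∃ p : Ultrafilter ℕ, (p : Filter ℕ) ≤ atTop ∧
    ∀ P : ℕ → Prop, (∀ᶠ n in p, P n) → ∀ᶠ m in p, ∀ᶠ n in p, P (m + n) := by
  let : AddSemigroup (Ultrafilter ℕ) := Ultrafilter.addSemigroup
  obtain ⟨p, hp, hpp⟩ := exists_idempotent_in_compact_add_subsemigroup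
    Ultrafilter.continuous_add_left {p : Ultrafilter ℕ | ∀ n, Set.Ici n ∈ p}
    ⟨hyperfilter ℕ, fun n => Nat.hyperfilter_le_atTop (Ici_mem_atTop n)⟩
    (by simpa only [Set.ofPred_forall] using
      (isClosed_iInter fun n => ultrafilter_isClosed_basic (Set.Ici n)).isCompact)
    fun p _ q hq n => (Ultrafilter.eventually_add p q (n ≤ ·)).2 <|
      .of_forall fun m =>
        mem_of_superset (hq n) fun k (hk : n ≤ k) => hk.trans (Nat.le_add_left k m)
  exact ⟨p, le_iInf fun n => le_principal_iff.2 (hp n), fun P hP =>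
    (Ultrafilter.eventually_add p p P).1 (hpp.symm ▸ hP)⟩

variable {𝕜 E : Type*} [NontriviallyNormedField 𝕜] [NormedAddCommGroup E] [NormedSpace 𝕜 E]
  {T : E →L[𝕜] E} {x : E}

theorem precompactOrbits.mapClusterPt (hinf : ∀ z : E, z ≠ 0 → 0 < ⨅ n : ℕ, ‖(T ^ n) z‖)
    (hx : x ∈ precompactOrbits T) : MapClusterPt x atTop fun n : ℕ => (T ^ n) x := by
  obtain ⟨K, hK, hxK⟩ := hx
  obtain ⟨p, hp, hadd⟩ := exists_ultrafilter_le_atTop_eventually_add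
  obtain ⟨w, -, hw : Tendsto (fun n : ℕ => (T ^ n) x) p (𝓝 w)⟩ :=
    hK.ultrafilter_le_nhds (p.map fun n : ℕ => (T ^ n) x) (tendsto_principal.2 (.of_forall hxK))
  have hww : Tendsto (fun m : ℕ => (T ^ m) w) p (𝓝 w) := by
    refine (closed_nhds_basis w).tendsto_right_iff.2 fun s ⟨hs, hsc⟩ => ?_
    filter_upwards [hadd _ (hw hs)] with m hm
    refine hsc.mem_of_tendsto (((T ^ m).continuous.tendsto w).comp hw) (hm.mono fun n hn => ?_)
    rwa [pow_add] at hn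
  have hdiff : Tendsto (fun m : ℕ => ‖(T ^ m) (w - x)‖) p (𝓝 0) := by
    simpa using (hww.sub hw).norm
  have hwx : w = x := by
    by_contra hne
    have hle : ⨅ n : ℕ, ‖(T ^ n) (w - x)‖ ≤ 0 :=
      ge_of_tendsto' hdiff fun m => ciInf_le ⟨0, by rintro _ ⟨n, rfl⟩; positivity⟩ m
    exact hle.not_gt (hinf _ (sub_ne_zero.2 hne))
  exact mapClusterPt_iff_ultrafilter.2 ⟨p, hp, hwx ▸ hw⟩

theorem norm_le_mul_norm_pow_apply_of_mapClusterPt {C : ℝ}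
    (hC : ∀ (n : ℕ) (y : E), ‖(T ^ n) y‖ ≤ C * ‖y‖)
    (hx : MapClusterPt x atTop fun n : ℕ => (T ^ n) x) (m : ℕ) : ‖x‖ ≤ C * ‖(T ^ m) x‖ := by
  obtain ⟨p, hp, hpx⟩ := mapClusterPt_iff_ultrafilter.1 hx
  refine le_of_tendsto hpx.norm (hp ((eventually_ge_atTop m).mono fun n hn => ?_))
  obtain ⟨k, rfl⟩ := Nat.exists_eq_add_of_le' hn
  rw [pow_add]
  exact hC k ((T ^ m) x)

theorem mem_closure_range_of_mapClusterPt (hx : MapClusterPt x atTop fun n : ℕ => (T ^ n) x) :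
    x ∈ closure (Set.range T) := by
  obtain ⟨p, hp, hpx⟩ := mapClusterPt_iff_ultrafilter.1 hx
  refine mem_closure_of_tendsto hpx (hp ((eventually_ge_atTop 1).mono fun n hn => ?_))
  obtain ⟨k, rfl⟩ := Nat.exists_eq_add_of_le' hn
  exact ⟨(T ^ k) x, by rw [pow_succ']; rfl⟩

theorem surjective_of_mapClusterPt [CompleteSpace E] {K : NNReal} (hT : AntilipschitzWith K T)
    (hrec : ∀ x, MapClusterPt x atTop fun n : ℕ => (T ^ n) x) : Function.Surjective T := fun x =>
  (hT.isClosed_range T.uniformContinuous).closure_subset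
    (mem_closure_range_of_mapClusterPt (hrec x))

end Recurrence

section Main

variable {𝕜 H : Type*} [RCLike 𝕜] [NormedAddCommGroup H] [InnerProductSpace 𝕜 H] [CompleteSpace H]
  {T : H →L[𝕜] H}

theorem similar_to_unitary_of_powerBounded_scalar_plus_compact_power_general
    (hT : IsPowerBounded T) {p : 𝕜[X]} (hp : p.Splits) (hp0 : p ≠ 0)
    (hcomp : IsCompactOperator (p.aeval T))
    (hinf : ∀ x : H, x ≠ 0 → 0 < ⨅ n : ℕ, ‖(T ^ n) x‖) :
    ∃ R : H ≃L[𝕜] H, ∃ U : H →L[𝕜] H,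
      (∀ x : H, ‖U x‖ = ‖x‖) ∧ Function.Surjective U ∧
      ∀ x : H, T x = R.symm (U (R x)) := by
  have htop := precompactOrbits.eq_top_of_isCompactOperator_aeval hT hp hp0 hcomp
  have hrec (x : H) : MapClusterPt x atTop fun n : ℕ => (T ^ n) x :=
    precompactOrbits.mapClusterPt hinf (htop ▸ Submodule.mem_top)
  obtain ⟨C, hC0, hC⟩ := hT.exists_pos
  have hlow (n : ℕ) (x : H) : ‖x‖ ≤ C * ‖(T ^ n) x‖ :=
    norm_le_mul_norm_pow_apply_of_mapClusterPt hC (hrec x) n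
  have hsurj : Function.Surjective T := surjective_of_mapClusterPt
    (T.antilipschitz_of_bound (K := ⟨C, hC0.le⟩) (hlow 1)) hrec
  obtain ⟨R, V, hRV⟩ := exists_similar_linearIsometry hT (inv_pos.2 hC0) fun n x =>
    (inv_mul_le_iff₀ hC0).2 (hlow n x)
  refine ⟨R, V.toContinuousLinearMap, V.norm_map, fun y => ?_, hRV⟩
  obtain ⟨x, hx⟩ := hsurj (R.symm y)
  exact ⟨R x, R.symm.injective ((hRV x).symm.trans hx)⟩

end Main

/-- Let `H` be a Hilbert space over `𝕜` (`ℝ` or `ℂ`) and let `T = α·I + S`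
be power-bounded with `S^k` compact for some `k ≥ 1`. If `inf_n ‖Tⁿ x‖ > 0` for every
`x ≠ 0`, then `T` is similar to a unitary operator: `T = R⁻¹ ∘ U ∘ R` for some invertible
bounded operator `R` and surjective linear isometry `U` of `H`. -/
theorem similar_to_unitary_of_powerBounded_scalar_plus_compact_power
    {𝕜 : Type*} [RCLike 𝕜] {H : Type*} [NormedAddCommGroup H] [InnerProductSpace 𝕜 H]
    [CompleteSpace H]
    (α : 𝕜) (S : H →L[𝕜] H) (k : ℕ) (hk : 1 ≤ k)
    (hS : IsCompactOperator (S ^ k : H →L[𝕜] H))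
    (T : H →L[𝕜] H) (hT : T = α • (1 : H →L[𝕜] H) + S)
    (hpb : ∃ C : ℝ, ∀ n : ℕ, ‖T ^ n‖ ≤ C)
    (hinf : ∀ x : H, x ≠ 0 → 0 < ⨅ n : ℕ, ‖(T ^ n) x‖) :
    ∃ R : H ≃L[𝕜] H, ∃ U : H →L[𝕜] H,
      (∀ x : H, ‖U x‖ = ‖x‖) ∧ Function.Surjective U ∧
      ∀ x : H, T x = R.symm (U (R x)) := by
  have hp : (Polynomial.X - Polynomial.C α).aeval T = S := by
    simp [hT, Algebra.algebraMap_eq_smul_one]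
  exact similar_to_unitary_of_powerBounded_scalar_plus_compact_power_general hpb
    ((Polynomial.Splits.X_sub_C α).pow k) (pow_ne_zero k (Polynomial.X_sub_C_ne_zero α))
    (by rwa [map_pow, hp]) hinf
end

section
/- Let X be a reflexive Banach space over 𝕜 (𝕜 = ℝ or ℂ), let T be a power-bounded operator on X, and let E : X → X be a bounded operator such that (1/n) ∑_{k=1}^n T^k x → E x in norm for every x ∈ X. Then the adjoint averages converge: (1/n) ∑_{k=1}^n T*^k x* → E* x* in norm for every x* ∈ X*, where E* is the adjoint of E. -/
open Filter Finset

/-- The Banach-space adjoint of `T`, acting on the dual space: `T* f = f ∘ T`. -/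
noncomputable def banachAdjoint {𝕜 : Type*} [RCLike 𝕜] {X : Type*} [NormedAddCommGroup X]
    [NormedSpace 𝕜 X] (T : X →L[𝕜] X) :
    StrongDual 𝕜 X →L[𝕜] StrongDual 𝕜 X :=
  (ContinuousLinearMap.compL 𝕜 X X 𝕜).flip T

/-!
Write `Aₙ(T) = n⁻¹ ∑_{k=1}^n Tᵏ` and `S = T*`, so that `Aₙ(S) = Aₙ(T)*`. Split
`f = (f - E* f) + E* f`. Since `E T = E`, the functional `E* f` is fixed by `S`, so `Aₙ(S)` does
not move it. By reflexivity, a functional on `X*` vanishing on the range of `S - 1` is evaluation at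
some `x` with `T x = x`; then `E x = x`, so it vanishes at `f - E* f` too, which by Hahn-Banach lies
in the closure of that range. On the range itself the sums telescope, leaving terms of size
`n⁻¹ ‖Sⁿ g‖`, so `Aₙ(S)` tends to `0` there, and also on the closure because the `Aₙ(S)` are
uniformly bounded: apply Banach-Steinhaus twice to `f (Aₙ(T) x)`.
-/

section CesaroMean

variable {𝕜 V : Type*} [NontriviallyNormedField 𝕜] [SeminormedAddCommGroup V] [NormedSpace 𝕜 V]

/-- The `n`-th Cesàro mean `n⁻¹ (S + S² + ⋯ + Sⁿ)` of the powers of an operator, as an operator;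
it starts at `S` rather than at the identity. For `n = 0` it is `0`. -/
noncomputable def cesaroMean (S : V →L[𝕜] V) (n : ℕ) : V →L[𝕜] V :=
  (n : 𝕜)⁻¹ • ∑ k ∈ Icc 1 n, S ^ k

theorem cesaroMean_apply (S : V →L[𝕜] V) (n : ℕ) (v : V) :
    cesaroMean S n v = (n : 𝕜)⁻¹ • ∑ k ∈ Icc 1 n, (S ^ k) v := by
  simp only [cesaroMean, smul_apply, _root_.sum_apply]

theorem cesaroMean_apply_eq_birkhoffAverage (S : V →L[𝕜] V) (n : ℕ) (v : V) :
    cesaroMean S n v = birkhoffAverage 𝕜 S S n v := by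
  have hIcc : Icc 1 n = Ico (0 + 1) (n + 1) := rfl
  rw [cesaroMean_apply, birkhoffAverage, birkhoffSum, range_eq_Ico, hIcc, ← sum_Ico_add']
  simp only [FunLike.coe_pow_eq_iterate, Function.iterate_succ_apply']

theorem tendsto_cesaroMean_of_isFixedPt [CharZero 𝕜] {S : V →L[𝕜] V} {v : V}
    (hv : Function.IsFixedPt S v) : Tendsto (cesaroMean S · v) atTop (nhds v) := by
  simpa only [cesaroMean_apply_eq_birkhoffAverage, hv.eq] using hv.tendsto_birkhoffAverage 𝕜 S

theorem cesaroMean_map (S : V →L[𝕜] V) (n : ℕ) (v : V) :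
    cesaroMean S n (S v) = S (cesaroMean S n v) := by
  simp only [cesaroMean_apply, map_smul, map_sum, FunLike.coe_pow_eq_iterate,
    ← Function.iterate_succ_apply, ← Function.iterate_succ_apply']

theorem cesaroMean_map_sub_self (S : V →L[𝕜] V) (n : ℕ) (v : V) :
    cesaroMean S n (S v - v) = (n : 𝕜)⁻¹ • (S ^ n) (S v) - (n : 𝕜)⁻¹ • S v := by
  rw [map_sub, cesaroMean_apply_eq_birkhoffAverage, cesaroMean_apply_eq_birkhoffAverage,
    birkhoffAverage_apply_sub_birkhoffAverage, smul_sub, FunLike.coe_pow_eq_iterate,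
    ← Function.iterate_succ_apply' S, Function.iterate_succ_apply]

end CesaroMean

section MeanErgodic

variable {𝕜 V : Type*} [RCLike 𝕜] [SeminormedAddCommGroup V] [NormedSpace 𝕜 V]

theorem tendsto_inv_smul_pow_apply_of_norm_pow_le {S : V →L[𝕜] V} {C : ℝ}
    (hC : ∀ n : ℕ, ‖S ^ n‖ ≤ C) (v : V) :
    Tendsto (fun n : ℕ => (n : 𝕜)⁻¹ • (S ^ n) v) atTop (nhds 0) :=
  tendsto_inv_atTop_nhds_zero_nat.zero_smul_isBoundedUnder_le
    (isBoundedUnder_of ⟨C * ‖v‖, fun n => (S ^ n).le_of_opNorm_le (hC n) v⟩)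

theorem tendsto_cesaroMean_map_sub_self {S : V →L[𝕜] V} {v : V}
    (hv : Tendsto (fun n : ℕ => (n : 𝕜)⁻¹ • (S ^ n) (S v)) atTop (nhds 0)) :
    Tendsto (cesaroMean S · (S v - v)) atTop (nhds 0) := by
  have hSv : Tendsto (fun n : ℕ => (n : 𝕜)⁻¹ • S v) atTop (nhds 0) := by
    simpa only [zero_smul] using (tendsto_inv_atTop_nhds_zero_nat (𝕜 := 𝕜)).smul_const (S v)
  simpa only [cesaroMean_map_sub_self, sub_zero] using hv.sub hSv

theorem tendsto_cesaroMean_of_mem_topologicalClosure {S : V →L[𝕜] V}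
    (hbdd : ∃ C, ∀ n, ‖cesaroMean S n‖ ≤ C)
    (hpow : ∀ v, Tendsto (fun n : ℕ => (n : 𝕜)⁻¹ • (S ^ n) v) atTop (nhds 0))
    {v : V} (hv : v ∈ (S - 1).range.topologicalClosure) :
    Tendsto (cesaroMean S · v) atTop (nhds 0) := by
  have hequi : Equicontinuous ((↑) ∘ cesaroMean S : ℕ → V → V) :=
    ((NormedSpace.equicontinuous_TFAE (cesaroMean S)).out 5 1).mp hbdd
  have hclosed : IsClosed {v | Tendsto (cesaroMean S · v) atTop (nhds 0)} :=
    hequi.isClosed_setOfPred_tendsto continuous_const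
  refine closure_minimal ?_ hclosed hv
  rintro _ ⟨u, rfl⟩
  exact tendsto_cesaroMean_map_sub_self (hpow (S u))

theorem tendsto_cesaroMean_of_sub_mem_topologicalClosure {S : V →L[𝕜] V}
    (hbdd : ∃ C, ∀ n, ‖cesaroMean S n‖ ≤ C)
    (hpow : ∀ v, Tendsto (fun n : ℕ => (n : 𝕜)⁻¹ • (S ^ n) v) atTop (nhds 0))
    {v w : V} (hw : Function.IsFixedPt S w) (hvw : v - w ∈ (S - 1).range.topologicalClosure) :
    Tendsto (cesaroMean S · v) atTop (nhds w) := by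
  simpa only [← map_add, sub_add_cancel, zero_add] using
    (tendsto_cesaroMean_of_mem_topologicalClosure hbdd hpow hvw).add
      (tendsto_cesaroMean_of_isFixedPt hw)

end MeanErgodic

section HahnBanach

variable {𝕜 V : Type*} [RCLike 𝕜] [SeminormedAddCommGroup V] [NormedSpace 𝕜 V]

theorem mem_topologicalClosure_of_forall_strongDual {M : Submodule 𝕜 V} {v : V}
    (h : ∀ φ : StrongDual 𝕜 V, (∀ m ∈ M, φ m = 0) → φ v = 0) : v ∈ M.topologicalClosure := by
  have : IsClosed (M.topologicalClosure : Set V) := M.isClosed_topologicalClosure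
  rw [← Submodule.Quotient.mk_eq_zero, SeparatingDual.eq_zero_iff_forall_dual_eq_zero (R := 𝕜)]
  refine fun φ => h (φ.comp M.topologicalClosure.mkQL) fun m hm => ?_
  have hm_zero : M.topologicalClosure.mkQL m = 0 :=
    (Submodule.Quotient.mk_eq_zero _).mpr (M.le_topologicalClosure hm)
  rw [ContinuousLinearMap.comp_apply, hm_zero, map_zero]

end HahnBanach

section BanachAdjoint

variable {𝕜 X : Type*} [RCLike 𝕜] [NormedAddCommGroup X] [NormedSpace 𝕜 X]

theorem banachAdjoint_apply (T : X →L[𝕜] X) (f : StrongDual 𝕜 X) (x : X) :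
    banachAdjoint T f x = f (T x) :=
  rfl

theorem banachAdjoint_pow (T : X →L[𝕜] X) (n : ℕ) :
    banachAdjoint (T ^ n) = banachAdjoint T ^ n := by
  induction n with
  | zero => rfl
  | succ n ih => rw [pow_succ, pow_succ', ← ih]; rfl

theorem banachAdjoint_cesaroMean (T : X →L[𝕜] X) (n : ℕ) :
    banachAdjoint (cesaroMean T n) = cesaroMean (banachAdjoint T) n := by
  simp only [cesaroMean, ← banachAdjoint_pow]
  simp only [banachAdjoint, map_smul, map_sum]

theorem norm_banachAdjoint_le (T : X →L[𝕜] X) : ‖banachAdjoint T‖ ≤ ‖T‖ :=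
  ContinuousLinearMap.opNorm_le_bound _ (norm_nonneg T) fun f =>
    (f.opNorm_comp_le T).trans_eq (mul_comm _ _)

theorem exists_norm_banachAdjoint_le_of_forall_isBounded [CompleteSpace X] {ι : Type*}
    {A : ι → X →L[𝕜] X}
    (hA : ∀ (f : StrongDual 𝕜 X) x, Bornology.IsBounded (Set.range fun i => f (A i x))) :
    ∃ C, ∀ i, ‖banachAdjoint (A i)‖ ≤ C := by
  refine banach_steinhaus fun f => banach_steinhaus fun x => ?_
  obtain ⟨C, hC⟩ := (hA f x).exists_norm_le
  exact ⟨C, fun i => hC _ (Set.mem_range_self i)⟩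

theorem eq_of_isFixedPt_of_forall_tendsto_cesaroMean {T : X →L[𝕜] X} {x y : X}
    (hx : Function.IsFixedPt T x)
    (hy : ∀ f : StrongDual 𝕜 X, Tendsto (fun n => f (cesaroMean T n x)) atTop (nhds (f y))) :
    y = x :=
  (SeparatingDual.eq_iff_forall_dual_eq (R := 𝕜)).mpr fun f =>
    tendsto_nhds_unique (hy f) ((f.continuous.tendsto x).comp (tendsto_cesaroMean_of_isFixedPt hx))

theorem isFixedPt_banachAdjoint_of_forall_tendsto_cesaroMean {T : X →L[𝕜] X}
    {f g : StrongDual 𝕜 X}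
    (hf : Tendsto (cesaroMean (banachAdjoint T) · (banachAdjoint T f - f)) atTop (nhds 0))
    (hg : ∀ x, Tendsto (fun n => f (cesaroMean T n x)) atTop (nhds (g x))) :
    Function.IsFixedPt (banachAdjoint T) g := by
  ext x
  have hdual (n : ℕ) : cesaroMean (banachAdjoint T) n (banachAdjoint T f - f) x
      = f (cesaroMean T n (T x)) - f (cesaroMean T n x) := by
    rw [← banachAdjoint_cesaroMean, banachAdjoint_apply, sub_apply, banachAdjoint_apply,
      cesaroMean_map]
  have hdiff :
      Tendsto (fun n => f (cesaroMean T n (T x)) - f (cesaroMean T n x)) atTop (nhds 0) := by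
    simpa only [hdual, zero_apply] using hf.eval_const x
  exact sub_eq_zero.mp (tendsto_nhds_unique ((hg (T x)).sub (hg x)) hdiff)

theorem sub_mem_topologicalClosure_range_of_forall_isFixedPt
    (hrefl : Function.Surjective (NormedSpace.inclusionInDoubleDual 𝕜 X)) {T : X →L[𝕜] X}
    {f g : StrongDual 𝕜 X} (hfg : ∀ x, Function.IsFixedPt T x → f x = g x) :
    f - g ∈ (banachAdjoint T - 1).range.topologicalClosure := by
  refine mem_topologicalClosure_of_forall_strongDual fun φ hφ => ?_
  obtain ⟨x, rfl⟩ := hrefl φ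
  have hx : Function.IsFixedPt T x :=
    (SeparatingDual.eq_iff_forall_dual_eq (R := 𝕜)).mpr fun h =>
      sub_eq_zero.mp (hφ (banachAdjoint T h - h) ⟨h, rfl⟩)
  rw [NormedSpace.dual_def, sub_apply, hfg x hx, sub_self]

theorem adjoint_cesaro_converges_general [CompleteSpace X]
    (hrefl : Function.Surjective (NormedSpace.inclusionInDoubleDual 𝕜 X)) (T E : X →L[𝕜] X)
    (hpow : ∀ f : StrongDual 𝕜 X,
      Tendsto (fun n : ℕ => (n : 𝕜)⁻¹ • (banachAdjoint T ^ n) f) atTop (nhds 0))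
    (hE : ∀ x, ∀ f : StrongDual 𝕜 X,
      Tendsto (fun n => f (cesaroMean T n x)) atTop (nhds (f (E x))))
    (f : StrongDual 𝕜 X) :
    Tendsto (cesaroMean (banachAdjoint T) · f) atTop (nhds (banachAdjoint E f)) := by
  have hbdd : ∃ C, ∀ n, ‖cesaroMean (banachAdjoint T) n‖ ≤ C := by
    simpa only [banachAdjoint_cesaroMean] using exists_norm_banachAdjoint_le_of_forall_isBounded
      fun f x => Metric.isBounded_range_of_tendsto _ (hE x f)
  have hfixed : Function.IsFixedPt (banachAdjoint T) (banachAdjoint E f) :=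
    isFixedPt_banachAdjoint_of_forall_tendsto_cesaroMean
      (tendsto_cesaroMean_map_sub_self (hpow (banachAdjoint T f))) fun x => hE x f
  have hagree (x : X) (hx : Function.IsFixedPt T x) : f x = banachAdjoint E f x := by
    rw [banachAdjoint_apply, eq_of_isFixedPt_of_forall_tendsto_cesaroMean hx (hE x)]
  have hclosure : f - banachAdjoint E f ∈ (banachAdjoint T - 1).range.topologicalClosure :=
    sub_mem_topologicalClosure_range_of_forall_isFixedPt hrefl hagree
  exact tendsto_cesaroMean_of_sub_mem_topologicalClosure hbdd hpow hfixed hclosure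

end BanachAdjoint

/-- Let `X` be a reflexive Banach space over `𝕜` (`ℝ` or `ℂ`), `T`
power-bounded with ergodic projection `E` (the strong limit of the Cesàro averages of `T`).
Then the Cesàro averages of the adjoint `T*` converge in norm to `E* x*` for every
`x* ∈ X*`. -/
theorem adjoint_cesaro_converges {𝕜 : Type*} [RCLike 𝕜]
    {X : Type*} [NormedAddCommGroup X] [NormedSpace 𝕜 X] [CompleteSpace X]
    (hrefl : Function.Bijective (NormedSpace.inclusionInDoubleDual 𝕜 X))
    (T : X →L[𝕜] X) (hpb : ∃ C : ℝ, ∀ n : ℕ, ‖T ^ n‖ ≤ C)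
    (E : X →L[𝕜] X)
    (hE : ∀ x : X, Tendsto (fun n : ℕ => (n : 𝕜)⁻¹ • ∑ k ∈ Icc 1 n, (T ^ k) x)
      atTop (nhds (E x))) :
    ∀ f : StrongDual 𝕜 X,
      Tendsto (fun n : ℕ => (n : 𝕜)⁻¹ • ∑ k ∈ Icc 1 n, (banachAdjoint T ^ k) f)
        atTop (nhds (banachAdjoint E f)) := by
  obtain ⟨C, hC⟩ := hpb
  have hadj (n : ℕ) : ‖banachAdjoint T ^ n‖ ≤ C := by
    simpa only [banachAdjoint_pow] using (norm_banachAdjoint_le (T ^ n)).trans (hC n)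
  have hweak (x : X) (f : StrongDual 𝕜 X) :
      Tendsto (fun n => f (cesaroMean T n x)) atTop (nhds (f (E x))) := by
    simpa only [cesaroMean_apply] using! (f.continuous.tendsto (E x)).comp (hE x)
  simpa only [cesaroMean_apply] using adjoint_cesaro_converges_general hrefl.surjective T E
    (tendsto_inv_smul_pow_apply_of_norm_pow_le hadj) hweak
end
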